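/- Invariance of D_4^+ singularities under isometric and anti-isometric deformations: let f be a generalized timelike minimal surface with real Weierstrass data (g1, g2, ω1 du, ω2 dv) and let p be an ω-singular point of f. Then the following are equivalent: (i) f is A-equivalent at p to the D_4^+ singularity f_{D4+}(u,v) = (uv, u^2 + 3v^2, u^2v + v^3) at the origin; (ii) for every θ ∈ R the associated family member f_θ is A-equivalent at p to the D_4^+ singularity; (iii) the conjugate surface f̂ is A-equivalent at p to the D_4^+ singularity. -/

import Mathlib

noncomputable section

open Real Filter

abbrev R2 : Type := ℝ × ℝ
abbrev R3 : Type := ℝ × ℝ × ℝ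

/-- The partial derivative in the `u`-direction. -/
def pu (f : R2 → R3) (p : R2) : R3 := fderiv ℝ f p (1, 0)
/-- The partial derivative in the `v`-direction. -/
def pv (f : R2 → R3) (p : R2) : R3 := fderiv ℝ f p (0, 1)

/-- Determinant of three column vectors in ℝ³. -/
def det3 (a b c : R3) : ℝ :=
  a.1 * (b.2.1 * c.2.2 - b.2.2 * c.2.1)
  - b.1 * (a.2.1 * c.2.2 - a.2.2 * c.2.1)
  + c.1 * (a.2.1 * b.2.2 - a.2.2 * b.2.1)

/-- Determinant of two vectors in ℝ². -/
def det2 (a b : R2) : ℝ := a.1 * b.2 - a.2 * b.1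

/-- Euclidean inner product on ℝ³. -/
def ip3 (a b : R3) : ℝ := a.1 * b.1 + a.2.1 * b.2.1 + a.2.2 * b.2.2

/-- `f : ℝ² → ℝ³ = 𝕃³` is the generalized timelike minimal surface with real Weierstrass
data `(g1, g2, w1 du, w2 dv)`: it is smooth, its partial derivatives are
`f_u = (ω1/2)·(-1-g1², 1-g1², 2g1)` and `f_v = (ω2/2)·(1+g2², 1-g2², -2g2)`
(which encodes the Weierstrass-type integral representation), and it is an immersion
on an open dense set. -/
structure IsGTMS (f : R2 → R3) (g1 g2 w1 w2 : ℝ → ℝ) : Prop where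
  smooth_f : ContDiff ℝ (⊤ : ℕ∞) f
  smooth_g1 : ContDiff ℝ (⊤ : ℕ∞) g1
  smooth_g2 : ContDiff ℝ (⊤ : ℕ∞) g2
  smooth_w1 : ContDiff ℝ (⊤ : ℕ∞) w1
  smooth_w2 : ContDiff ℝ (⊤ : ℕ∞) w2
  deriv_u : ∀ p : R2, pu f p =
    ((-1 - g1 p.1 ^ 2) * w1 p.1 / 2, (1 - g1 p.1 ^ 2) * w1 p.1 / 2, g1 p.1 * w1 p.1)
  deriv_v : ∀ p : R2, pv f p =
    ((1 + g2 p.2 ^ 2) * w2 p.2 / 2, (1 - g2 p.2 ^ 2) * w2 p.2 / 2, -(g2 p.2 * w2 p.2))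
  dense_immersion : Dense {p : R2 | Function.Injective (fderiv ℝ f p)}

/-- `Φ` is a germ of diffeomorphism at `p`. -/
def IsLocalDiffeoAt {E F : Type*} [NormedAddCommGroup E] [NormedSpace ℝ E]
    [NormedAddCommGroup F] [NormedSpace ℝ F] (Φ : E → F) (p : E) : Prop :=
  ∃ (U : Set E) (V : Set F) (Φinv : F → E),
    IsOpen U ∧ p ∈ U ∧ IsOpen V ∧ Φ p ∈ V ∧
    ContDiffOn ℝ (⊤ : ℕ∞) Φ U ∧ ContDiffOn ℝ (⊤ : ℕ∞) Φinv V ∧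
    Set.MapsTo Φ U V ∧ Set.MapsTo Φinv V U ∧
    (∀ x ∈ U, Φinv (Φ x) = x) ∧ (∀ y ∈ V, Φ (Φinv y) = y)

/-- 𝒜-equivalence of the germ of `f1` at `p1` and the germ of `f2` at `p2`. -/
def AEquiv (f1 : R2 → R3) (p1 : R2) (f2 : R2 → R3) (p2 : R2) : Prop :=
  ∃ (Φ : R2 → R2) (Ψ : R3 → R3),
    IsLocalDiffeoAt Φ p1 ∧ Φ p1 = p2 ∧
    IsLocalDiffeoAt Ψ (f1 p1) ∧ Ψ (f1 p1) = f2 p2 ∧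
    ∀ᶠ x in nhds p1, Ψ (f1 x) = f2 (Φ x)

/-- The canonical unit normal of a generalized timelike minimal surface. -/
def gtmsNormal (g1 g2 : ℝ → ℝ) (p : R2) : R3 :=
  (Real.sqrt ((1 - g1 p.1 * g2 p.2) ^ 2 + 2 * (g1 p.1 + g2 p.2) ^ 2))⁻¹ •
    (g1 p.1 + g2 p.2, -g1 p.1 + g2 p.2, 1 + g1 p.1 * g2 p.2)

/-- The signed area density function `λ = det(f_u, f_v, n)`. -/
def areaDensity (f : R2 → R3) (g1 g2 : ℝ → ℝ) (p : R2) : ℝ :=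
  det3 (pu f p) (pv f p) (gtmsNormal g1 g2 p)

/-- `f` is a front at `p`: the Legendrian lift `(f, n)` is an immersion at `p`,
where `n` is the canonical unit normal. -/
def IsFrontAt (f : R2 → R3) (g1 g2 : ℝ → ℝ) (p : R2) : Prop :=
  Function.Injective (fderiv ℝ (fun q => (f q, gtmsNormal g1 g2 q)) p)

/-- The differential of `f` at `p` has rank one. -/
def RankOne (f : R2 → R3) (p : R2) : Prop :=
  LinearMap.rank (fderiv ℝ f p).toLinearMap = 1

/-- Directional derivative of `F` along the vector field `X`. -/
def vD (X : R2 → R2) (F : R2 → R3) : R2 → R3 := fun q => fderiv ℝ F q (X q)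

/-- `φ_i = g_i' / (g_i² ω_i)`. -/
def phiW (g w : ℝ → ℝ) : ℝ → ℝ := fun t => deriv g t / (g t ^ 2 * w t)
/-- `Φ_i = (g_i/g_i') φ_i'`. -/
def PhiW (g w : ℝ → ℝ) : ℝ → ℝ := fun t => g t / deriv g t * deriv (phiW g w) t

/-- standard cuspidal butterfly -/
def fCBF : R2 → R3 := fun q =>
  (q.1, 5 * q.2 ^ 4 + 2 * q.1 * q.2, 4 * q.2 ^ 5 + q.1 * q.2 ^ 2 - q.1 ^ 2)
/-- standard cuspidal S₁⁺ singularity -/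
def fCS1p : R2 → R3 := fun q => (q.1, q.2 ^ 2, q.2 ^ 3 * (q.1 ^ 2 + q.2 ^ 2))
/-- standard cuspidal S₁⁻ singularity -/
def fCS1m : R2 → R3 := fun q => (q.1, q.2 ^ 2, q.2 ^ 3 * (q.1 ^ 2 - q.2 ^ 2))
/-- standard cuspidal edge -/
def fCE : R2 → R3 := fun q => (q.1, q.2 ^ 2, q.2 ^ 3)
/-- standard (2,5)-cuspidal edge -/
def fCE25 : R2 → R3 := fun q => (q.1, q.2 ^ 2, q.2 ^ 5)
/-- standard cuspidal beaks -/
def fCBK : R2 → R3 := fun q =>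
  (q.2, q.1 ^ 3 - q.1 * q.2 ^ 2, 3 * q.1 ^ 4 - 2 * q.1 ^ 2 * q.2 ^ 2)
/-- standard cuspidal lips -/
def fCLP : R2 → R3 := fun q =>
  (q.2, q.1 ^ 3 + q.1 * q.2 ^ 2, 3 * q.1 ^ 4 + 2 * q.1 ^ 2 * q.2 ^ 2)
/-- standard D₄⁺ singularity -/
def fD4p : R2 → R3 := fun q =>
  (q.1 * q.2, q.1 ^ 2 + 3 * q.2 ^ 2, q.1 ^ 2 * q.2 + q.2 ^ 3)
/-- standard D₄⁻ singularity -/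
def fD4m : R2 → R3 := fun q =>
  (q.1 * q.2, q.1 ^ 2 - 3 * q.2 ^ 2, q.1 ^ 2 * q.2 - q.2 ^ 3)

/-! Since `pu f` depends only on `u` and `pv f` only on `v`, the surface is a translation surface
`f (p + x) = f p + α x.1 + β x.2`. Such a surface has a `D₄⁺` singularity at `p` exactly when
`α'(0) = β'(0) = 0` and each of the triples `α''(0), β''(0), β'''(0)` and `α''(0), β''(0), α'''(0)`
is linearly independent. Nonzero constant factors in front of `α` and `β` do not affect this
condition, and passing to the associated family or to the conjugate surface only inserts such
factors.

The criterion is proved for the linearly equivalent form `(u ^ 2, v ^ 2, u ^ 3 + v ^ 3)` of `D₄⁺`.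
Necessity is a comparison of the second and third order terms along rays through the origin. For
sufficiency, Whitney's theorem on even and odd parts, `g u = h (u ^ 2) + u * k (u ^ 2)`, factors the
cusp `β` through `(v ^ 2, v ^ 3)`, and the surface becomes a fold in the remaining variable. Hence
there is a source coordinate `t = u * r` whose square is a smooth function of the image point and
whose cube, up to a smooth function of the image point, is a constant multiple of `u ^ 3` plus a
constant multiple of `v ^ 3`. Doing the same with the roles of `u` and `v` exchanged gives the three
target coordinates. -/

open MeasureTheory
open scoped ContDiff Topology

section ParametricIntegral

universe u

/-- Local domination of all derivatives of the integrand of `y ↦ ∫ w, L (φ w) (K (w, y)) ∂μ`: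
the hypothesis under which this integral may be differentiated indefinitely. -/
def DominatedDerivatives {W E F G : Type*} [NormedAddCommGroup W] [NormedSpace ℝ W]
    [MeasurableSpace W] [NormedAddCommGroup E] [NormedSpace ℝ E] [NormedAddCommGroup F]
    [NormedSpace ℝ F] [Norm G] (μ : Measure W) (φ : W → G) (K : W × E → F) : Prop :=
  ∀ (n : ℕ) (R : ℝ), ∃ bound : W → ℝ, Integrable bound μ ∧
    ∀ᵐ w ∂μ, ∀ y, ‖y‖ ≤ R → ‖φ w‖ * ‖iteratedFDeriv ℝ n K (w, y)‖ ≤ bound w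

variable {W : Type*} {E F G : Type u} {H : Type*} [NormedAddCommGroup W] [NormedSpace ℝ W]
  [MeasurableSpace W] [NormedAddCommGroup E] [NormedSpace ℝ E]
  [NormedAddCommGroup F] [NormedSpace ℝ F] [NormedAddCommGroup G] [NormedSpace ℝ G]
  [NormedAddCommGroup H] {μ : Measure W} {φ : W → H} {K : W × E → F}

theorem DominatedDerivatives.fderiv_comp_inr (hK : ContDiff ℝ ∞ K)
    (h : DominatedDerivatives μ φ K) :
    DominatedDerivatives μ φ fun x => (fderiv ℝ K x).comp (.inr ℝ W E) := by
  intro n R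
  let P := (ContinuousLinearMap.compL ℝ E (W × E) F).flip (.inr ℝ W E)
  obtain ⟨bound, hint, hle⟩ := h (n + 1) R
  refine ⟨fun w => ‖P‖ * bound w, hint.const_mul _, ?_⟩
  filter_upwards [hle] with w hw y hy
  have hP : ‖iteratedFDeriv ℝ n (P ∘ fderiv ℝ K) (w, y)‖ ≤
      ‖P‖ * ‖iteratedFDeriv ℝ (n + 1) K (w, y)‖ := by
    rw [← norm_iteratedFDeriv_fderiv]
    exact P.norm_iteratedFDeriv_comp_left (hK.fderiv_right (m := ∞) (by simp)).contDiffAt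
      (by exact_mod_cast le_top)
  calc ‖φ w‖ * ‖iteratedFDeriv ℝ n (P ∘ fderiv ℝ K) (w, y)‖
      ≤ ‖φ w‖ * (‖P‖ * ‖iteratedFDeriv ℝ (n + 1) K (w, y)‖) := by gcongr
    _ = ‖P‖ * (‖φ w‖ * ‖iteratedFDeriv ℝ (n + 1) K (w, y)‖) := by ring
    _ ≤ ‖P‖ * bound w := by gcongr; exact hw y hy

variable [NormedSpace ℝ H] [OpensMeasurableSpace W] [SecondCountableTopology W]

theorem hasFDerivAt_integral_bilin (hφ : AEStronglyMeasurable φ μ) (hK : ContDiff ℝ ∞ K)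
    (h : DominatedDerivatives μ φ K) (L : H →L[ℝ] F →L[ℝ] G) (y : E) :
    HasFDerivAt (fun y => ∫ w, L (φ w) (K (w, y)) ∂μ)
      (∫ w, L.precompR E (φ w) ((fderiv ℝ K (w, y)).comp (.inr ℝ W E)) ∂μ) y := by
  have hK' : ContDiff ℝ ∞ fun x => (fderiv ℝ K x).comp (.inr ℝ W E) :=
    (hK.fderiv_right (m := ∞) (by simp)).clm_comp contDiff_const
  have meas {F' G' : Type u} [NormedAddCommGroup F'] [NormedSpace ℝ F'] [NormedAddCommGroup G']
      [NormedSpace ℝ G'] (L' : H →L[ℝ] F' →L[ℝ] G') {k : W × E → F'} (hk : ContDiff ℝ ∞ k)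
      (z : E) : AEStronglyMeasurable (fun w => L' (φ w) (k (w, z))) μ :=
    L'.aestronglyMeasurable_comp₂ hφ
      (hk.continuous.comp (Continuous.prodMk_left z)).aestronglyMeasurable
  obtain ⟨b₀, hb₀, hle₀⟩ := h 0 ‖y‖
  obtain ⟨b₁, hb₁, hle₁⟩ := h.fderiv_comp_inr hK 0 (‖y‖ + 1)
  refine hasFDerivAt_integral_of_dominated_of_fderiv_le
    (F' := fun y w => L.precompR E (φ w) ((fderiv ℝ K (w, y)).comp (.inr ℝ W E)))
    (Metric.ball_mem_nhds y one_pos) (.of_forall (meas L hK)) ?_ (meas (L.precompR E) hK' y) ?_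
    (hb₁.const_mul ‖L‖) ?_
  · refine (hb₀.const_mul ‖L‖).mono' (meas L hK y) ?_
    filter_upwards [hle₀] with w hw
    refine (L.le_opNorm₂ _ _).trans ?_
    rw [mul_assoc, ← norm_iteratedFDeriv_zero (𝕜 := ℝ) (f := K)]
    gcongr
    exact hw y le_rfl
  · filter_upwards [hle₁] with w hw z hz
    refine (ContinuousLinearMap.opNorm_comp_le (L (φ w)) _).trans ?_
    have hz' : ‖z‖ ≤ ‖y‖ + 1 := by
      have := norm_le_norm_add_norm_sub' z y
      linarith [mem_ball_iff_norm.1 hz]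
    refine (mul_le_mul_of_nonneg_right (L.le_opNorm _) (norm_nonneg _)).trans ?_
    rw [mul_assoc]
    gcongr
    simpa only [norm_iteratedFDeriv_zero] using hw z hz'
  · refine .of_forall fun w z _ => (L (φ w)).hasFDerivAt.comp z ?_
    exact (hK.differentiable (by simp) (w, z)).hasFDerivAt.comp z (hasFDerivAt_prodMk_right w z)

theorem contDiff_integral_bilin (hφ : AEStronglyMeasurable φ μ) (hK : ContDiff ℝ ∞ K)
    (h : DominatedDerivatives μ φ K) (L : H →L[ℝ] F →L[ℝ] G) :
    ContDiff ℝ ∞ fun y => ∫ w, L (φ w) (K (w, y)) ∂μ := by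
  refine contDiff_infty.2 fun n => ?_
  induction n generalizing F G with
  | zero => exact contDiff_zero.2 <| continuous_iff_continuousAt.2 fun y =>
      (hasFDerivAt_integral_bilin hφ hK h L y).continuousAt
  | succ n ih =>
    exact contDiff_succ_iff_hasFDerivAt.2 ⟨_,
      ih ((hK.fderiv_right (m := ∞) (by simp)).clm_comp contDiff_const) (h.fderiv_comp_inr hK)
        (L.precompR E), hasFDerivAt_integral_bilin hφ hK h L⟩

end ParametricIntegral

section Hadamard

universe u

variable {E F : Type u} [NormedAddCommGroup E] [NormedSpace ℝ E] [FiniteDimensional ℝ E]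
  [NormedAddCommGroup F] [NormedSpace ℝ F]

theorem contDiff_integral_Icc {K : ℝ × E → F} (hK : ContDiff ℝ ∞ K) (a b : ℝ) :
    ContDiff ℝ ∞ fun y => ∫ τ in Set.Icc a b, K (τ, y) := by
  have hdom : DominatedDerivatives (volume.restrict (Set.Icc a b)) (fun _ => (1 : ℝ)) K := by
    intro n R
    have : ProperSpace E := FiniteDimensional.proper ℝ E
    have hcpt : IsCompact (Set.Icc a b ×ˢ Metric.closedBall (0 : E) R) :=
      isCompact_Icc.prod (isCompact_closedBall 0 R)
    obtain ⟨M, hM⟩ := hcpt.exists_bound_of_continuousOn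
      (hK.continuous_iteratedFDeriv (m := n) (by exact_mod_cast le_top)).continuousOn
    refine ⟨fun _ => M, integrable_const M, ?_⟩
    filter_upwards [ae_restrict_mem measurableSet_Icc] with τ hτ y hy
    simpa using hM (τ, y) ⟨hτ, mem_closedBall_zero_iff.2 hy⟩
  simpa using contDiff_integral_bilin aestronglyMeasurable_const hK hdom (.lsmul ℝ ℝ)

variable [CompleteSpace F]

/- The quotient is `∫ τ in 0..1, fderiv ℝ m (x + (τ * s) • v) v`. -/
theorem exists_contDiff_slope {m : E → F} (hm : ContDiff ℝ ∞ m) :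
    ∃ k : ℝ × E × E → F, ContDiff ℝ ∞ k ∧ (∀ s x v, m (x + s • v) = m x + s • k (s, x, v)) ∧
      ∀ x v, k (0, x, v) = fderiv ℝ m x v := by
  let K : ℝ × ℝ × E × E → F := fun q =>
    fderiv ℝ m (q.2.2.1 + (q.1 * q.2.1) • q.2.2.2) q.2.2.2
  have hm' : ContDiff ℝ ∞ (fderiv ℝ m) := hm.fderiv_right (by simp)
  have hK : ContDiff ℝ ∞ K := (hm'.comp (by fun_prop)).clm_apply (by fun_prop)
  refine ⟨_, contDiff_integral_Icc hK 0 1, fun s x v => ?_, fun x v => by simp [K]⟩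
  have hderiv (τ : ℝ) : HasDerivAt (fun τ : ℝ => m (x + (τ * s) • v)) (s • K (τ, s, x, v)) τ := by
    have hline : HasDerivAt (fun τ : ℝ => x + (τ * s) • v) (s • v) τ := by
      simpa using (((hasDerivAt_id τ).mul_const s).smul_const v).const_add x
    simpa [K] using! (hm.differentiable (by simp) _).hasFDerivAt.comp_hasDerivAt τ hline
  have hcont : Continuous fun τ => s • K (τ, s, x, v) := by
    have := hK.continuous
    fun_prop
  have hint := intervalIntegral.integral_eq_sub_of_hasDerivAt (fun τ _ => hderiv τ)
    (hcont.intervalIntegrable 0 1)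
  rw [intervalIntegral.integral_of_le zero_le_one, integral_smul,
    ← integral_Icc_eq_integral_Ioc] at hint
  simp [hint]

end Hadamard

section CosSqrt

/-- The entire function `∑ (-1)ⁿ yⁿ / (2n)!`, whose value at `y ^ 2` is `cos y`. -/
def cosSqrtSeries (y : ℝ) : ℝ :=
  FormalMultilinearSeries.ofScalarsSum (E := ℝ) (fun n : ℕ => (-1 : ℝ) ^ n / (2 * n).factorial) y

theorem contDiff_cosSqrtSeries : ContDiff ℝ ∞ cosSqrtSeries := by
  set a : ℕ → ℝ := fun n => (-1 : ℝ) ^ n / (2 * n).factorial with ha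
  have hne : ∀ n, a n ≠ 0 := fun n => by positivity
  have hr : (FormalMultilinearSeries.ofScalars ℝ a).radius = ⊤ := by
    refine FormalMultilinearSeries.ofScalars_radius_eq_top_of_tendsto ℝ a (.of_forall hne) ?_
    have hle : ∀ n : ℕ, ‖a n.succ‖ / ‖a n‖ ≤ 1 / ((n : ℝ) + 1) := fun n => by
      have hfact : ((2 * n.succ).factorial : ℝ) =
          (2 * n + 2) * ((2 * n + 1) * (2 * n).factorial) := by
        rw [show 2 * n.succ = (2 * n + 1) + 1 by omega, Nat.factorial_succ, Nat.factorial_succ]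
        push_cast; ring
      simp only [ha, norm_div, norm_pow, norm_neg, norm_one, one_pow, hfact]
      rw [Real.norm_of_nonneg (by positivity), Real.norm_of_nonneg (by positivity),
        div_div_eq_mul_div, div_le_div_iff₀ (by positivity) (by positivity)]
      field_simp
      nlinarith [(Nat.cast_nonneg n : (0 : ℝ) ≤ n)]
    exact squeeze_zero (fun n => by positivity) hle tendsto_one_div_add_atTop_nhds_zero_nat
  have h := (FormalMultilinearSeries.ofScalars ℝ a).hasFPowerSeriesOnBall (by rw [hr]; simp)
  rw [hr] at h
  have h' : AnalyticOnNhd ℝ cosSqrtSeries Set.univ := by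
    simpa using! h.analyticOnNhd
  exact h'.contDiff.of_le le_top

theorem cosSqrtSeries_sq (y : ℝ) : cosSqrtSeries (y ^ 2) = cos y := by
  rw [cosSqrtSeries, FormalMultilinearSeries.ofScalars_sum_eq, Real.cos_eq_tsum]
  refine tsum_congr fun n => ?_
  rw [smul_eq_mul, ← pow_mul]
  ring

theorem cosSqrtSeries_of_pos {y : ℝ} (hy : 0 < y) : cosSqrtSeries y = cos √y := by
  rw [← cosSqrtSeries_sq, Real.sq_sqrt hy.le]

theorem deriv_cosSqrtSeries {y : ℝ} (hy : 0 < y) :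
    deriv cosSqrtSeries y = -sin √y / (2 * √y) := by
  have h : cosSqrtSeries =ᶠ[𝓝 y] fun y => cos √y :=
    (eventually_gt_nhds hy).mono fun z hz => cosSqrtSeries_of_pos hz
  rw [h.deriv_eq, (((Real.hasDerivAt_sqrt hy.ne')).cos).deriv]
  ring

theorem cosSqrtSeries_ode {y : ℝ} (hy : 0 < y) :
    4 * y * deriv (deriv cosSqrtSeries) y + 2 * deriv cosSqrtSeries y + cosSqrtSeries y = 0 := by
  have h : deriv cosSqrtSeries =ᶠ[𝓝 y] fun y => -sin √y / (2 * √y) :=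
    (eventually_gt_nhds hy).mono fun z hz => deriv_cosSqrtSeries hz
  have hs : 0 < √y := Real.sqrt_pos.2 hy
  have hd := Real.hasDerivAt_sqrt hy.ne'
  have h2 := (hd.sin.fun_neg.fun_div (hd.const_mul 2) (by positivity)).deriv
  rw [h.deriv_eq, h2, deriv_cosSqrtSeries hy, cosSqrtSeries_of_pos hy]
  have hy2 : y = √y ^ 2 := (Real.sq_sqrt hy.le).symm
  set r := √y
  rw [hy2]
  field_simp
  ring

theorem iteratedDeriv_cosSqrtSeries_ode (n : ℕ) {y : ℝ} (hy : 0 < y) :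
    4 * y * iteratedDeriv (n + 2) cosSqrtSeries y +
      (4 * n + 2) * iteratedDeriv (n + 1) cosSqrtSeries y +
        iteratedDeriv n cosSqrtSeries y = 0 := by
  have hd : ∀ m (y : ℝ), HasDerivAt (iteratedDeriv m cosSqrtSeries)
      (iteratedDeriv (m + 1) cosSqrtSeries y) y := fun m y => by
    rw [iteratedDeriv_succ]
    exact (contDiff_cosSqrtSeries.differentiable_iteratedDeriv m
      (by exact_mod_cast ENat.natCast_lt_top m) y).hasDerivAt
  induction n generalizing y with
  | zero =>
    simpa [iteratedDeriv_succ] using! cosSqrtSeries_ode hy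
  | succ n ih =>
    have hev : (fun y => 4 * y * iteratedDeriv (n + 2) cosSqrtSeries y +
        (4 * n + 2) * iteratedDeriv (n + 1) cosSqrtSeries y + iteratedDeriv n cosSqrtSeries y)
          =ᶠ[𝓝 y] fun _ => (0 : ℝ) := (eventually_gt_nhds hy).mono fun z hz => ih hz
    have h0 := hev.deriv_eq
    rw [((((hasDerivAt_id' y).const_mul 4).fun_mul (hd (n + 2) y)).fun_add
      ((hd (n + 1) y).const_mul (4 * (n : ℝ) + 2)) |>.fun_add (hd n y)).deriv, deriv_const] at h0
    push_cast
    linear_combination h0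

theorem iteratedDeriv_cosSqrtSeries_isBigO_one (n : ℕ) :
    iteratedDeriv n cosSqrtSeries =O[atTop] fun _ => (1 : ℝ) := by
  induction n using Nat.twoStepInduction with
  | zero =>
    refine .of_bound 1 ((eventually_gt_atTop 0).mono fun y hy => ?_)
    simpa [cosSqrtSeries_of_pos hy] using Real.abs_cos_le_one √y
  | one =>
    refine .of_bound 1 ((eventually_ge_atTop 1).mono fun y hy => ?_)
    have hs : 1 ≤ √y := Real.one_le_sqrt.2 hy
    rw [iteratedDeriv_one, deriv_cosSqrtSeries (by linarith), norm_div, norm_neg, Real.norm_eq_abs,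
      Real.norm_of_nonneg (by linarith), norm_one, mul_one, div_le_one (by linarith)]
    linarith [Real.abs_sin_le_one √y]
  | more n h₀ h₁ =>
    have hsum : (fun y => (4 * n + 2) * iteratedDeriv (n + 1) cosSqrtSeries y +
        iteratedDeriv n cosSqrtSeries y) =O[atTop] fun _ => (1 : ℝ) :=
      (h₁.const_mul_left _).add h₀
    refine .trans (.of_bound 1 ((eventually_ge_atTop 1).mono fun y hy => ?_)) hsum
    have hode := iteratedDeriv_cosSqrtSeries_ode n (by linarith : 0 < y)
    rw [← norm_neg ((4 * (n : ℝ) + 2) * _ + _), one_mul]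
    calc ‖iteratedDeriv (n + 2) cosSqrtSeries y‖
        ≤ ‖4 * y‖ * ‖iteratedDeriv (n + 2) cosSqrtSeries y‖ := by
          refine le_mul_of_one_le_left (norm_nonneg _) ?_
          rw [Real.norm_of_nonneg (by linarith)]
          linarith
      _ = _ := by
          rw [← norm_mul]
          congr 1
          linear_combination hode

theorem exists_hasTemperateGrowth_eqOn_Ici {g : ℝ → ℝ} (hg : ContDiff ℝ ∞ g)
    (hO : ∀ n, iteratedDeriv n g =O[atTop] fun _ => (1 : ℝ)) (a : ℝ) :
    ∃ c : ℝ → ℝ, c.HasTemperateGrowth ∧ Set.EqOn c g (Set.Ici a) := by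
  let χ : ℝ → ℝ := fun y => Real.smoothTransition (y - (a - 1))
  have hχ₁ {y : ℝ} (hy : a ≤ y) : χ y = 1 := Real.smoothTransition.one_of_one_le (by linarith)
  have hc : ContDiff ℝ ∞ fun y => χ y * g y :=
    (Real.smoothTransition.contDiff.comp (by fun_prop)).mul hg
  refine ⟨fun y => χ y * g y, ⟨hc, fun n => ?_⟩, fun y hy => by simp [hχ₁ hy]⟩
  obtain ⟨C, hC⟩ := (hO n).bound
  obtain ⟨b, hb⟩ := eventually_atTop.1 hC
  obtain ⟨C', hC'⟩ := (isCompact_Icc (a := a - 1) (b := max a b)).exists_bound_of_continuousOn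
    (hc.continuous_iteratedDeriv n (by exact_mod_cast le_top)).continuousOn
  refine ⟨0, max 0 (max C C'), fun y => ?_⟩
  rw [pow_zero, mul_one, norm_iteratedFDeriv_eq_norm_iteratedDeriv]
  rcases lt_or_ge y (a - 1) with hlow | hlow
  · have : (fun y => χ y * g y) =ᶠ[𝓝 y] fun _ => (0 : ℝ) := by
      filter_upwards [eventually_lt_nhds hlow] with z hz
      simp [χ, Real.smoothTransition.zero_of_nonpos (by linarith : z - (a - 1) ≤ 0)]
    simp [this.iteratedDeriv_eq]
  rcases le_or_gt y (max a b) with hmid | hhigh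
  · exact (hC' y ⟨hlow, hmid⟩).trans (by simp)
  · have : (fun y => χ y * g y) =ᶠ[𝓝 y] g := by
      filter_upwards [eventually_gt_nhds hhigh] with z hz
      simp [hχ₁ ((le_max_left a b).trans hz.le)]
    rw [this.iteratedDeriv_eq]
    have := hb y ((le_max_right a b).trans hhigh.le)
    rw [norm_one, mul_one] at this
    exact this.trans (by simp)

theorem exists_hasTemperateGrowth_sq_eq_cos :
    ∃ c : ℝ → ℝ, c.HasTemperateGrowth ∧ ∀ y, c (y ^ 2) = cos y := by
  obtain ⟨c, hc, heq⟩ := exists_hasTemperateGrowth_eqOn_Ici contDiff_cosSqrtSeries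
    iteratedDeriv_cosSqrtSeries_isBigO_one 0
  exact ⟨c, hc, fun y => by rw [heq (sq_nonneg y), cosSqrtSeries_sq]⟩

end CosSqrt

section Whitney

universe u

open FourierTransform
open scoped SchwartzMap RealInnerProductSpace

section SchwartzIntegral

variable {V H : Type*} {E F G : Type u} [NormedAddCommGroup V] [NormedSpace ℝ V]
  [MeasurableSpace V] [BorelSpace V] [SecondCountableTopology V] (μ : Measure V)
  [μ.HasTemperateGrowth] [NormedAddCommGroup H] [NormedSpace ℝ H] [NormedAddCommGroup E]
  [NormedSpace ℝ E] [NormedAddCommGroup F] [NormedSpace ℝ F] [NormedAddCommGroup G]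
  [NormedSpace ℝ G]

theorem dominatedDerivatives_schwartz (φ : 𝓢(V, H)) {K : V × E → F} (hK : K.HasTemperateGrowth) :
    DominatedDerivatives μ φ K := by
  intro n R
  obtain ⟨m, C, hC, hle⟩ := hK.norm_iteratedFDeriv_le_uniform n
  refine ⟨fun w => C * 2 ^ (m - 1) *
      ((1 + |R|) ^ m * (‖w‖ ^ 0 * ‖φ w‖) + ‖w‖ ^ m * ‖φ w‖),
    (((φ.integrable_pow_mul μ 0).const_mul _).add (φ.integrable_pow_mul μ m)).const_mul _,
    .of_forall fun w y hy => ?_⟩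
  have hpow : (1 + ‖(w, y)‖) ^ m ≤ 2 ^ (m - 1) * ((1 + |R|) ^ m + ‖w‖ ^ m) := by
    have : ‖(w, y)‖ ≤ |R| + ‖w‖ :=
      max_le (by simp) ((hy.trans (le_abs_self R)).trans (by simp))
    refine le_trans ?_ (add_pow_le (by positivity) (norm_nonneg w) m)
    gcongr ?_ ^ m
    linarith
  calc ‖φ w‖ * ‖iteratedFDeriv ℝ n K (w, y)‖
      ≤ ‖φ w‖ * (C * (2 ^ (m - 1) * ((1 + |R|) ^ m + ‖w‖ ^ m))) := by
        gcongr
        exact (hle n le_rfl _).trans (by gcongr)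
    _ = _ := by ring

theorem contDiff_integral_schwartz_bilin (φ : 𝓢(V, H)) {K : V × E → F}
    (hK : K.HasTemperateGrowth) (L : H →L[ℝ] F →L[ℝ] G) :
    ContDiff ℝ ∞ fun y => ∫ w, L (φ w) (K (w, y)) ∂μ :=
  contDiff_integral_bilin φ.continuous.aestronglyMeasurable hK.1
    (dominatedDerivatives_schwartz μ φ hK) L

end SchwartzIntegral

theorem hasTemperateGrowth_cexp_mul_I :
    Function.HasTemperateGrowth fun t : ℝ => Complex.exp (t * Complex.I) := by
  have hderiv (t : ℝ) : HasDerivAt (fun t : ℝ => Complex.exp (t * Complex.I))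
      (Complex.I * Complex.exp (t * Complex.I)) t := by
    simpa [mul_comm] using! ((Complex.ofRealCLM.hasDerivAt (x := t)).mul_const Complex.I).cexp
  have hiter (n : ℕ) : iteratedDeriv n (fun t : ℝ => Complex.exp (t * Complex.I)) =
      fun t : ℝ => Complex.I ^ n * Complex.exp (t * Complex.I) := by
    induction n with
    | zero => simp
    | succ n ih =>
      rw [iteratedDeriv_succ, ih]
      ext t
      rw [((hderiv t).const_mul (Complex.I ^ n)).deriv]
      ring
  refine ⟨(Complex.ofRealCLM.contDiff.mul contDiff_const).cexp, fun n => ⟨0, 1, fun t => ?_⟩⟩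
  rw [norm_iteratedFDeriv_eq_norm_iteratedDeriv, hiter]
  simp [Complex.norm_exp_ofReal_mul_I]

section EvenPart

variable {Q : Type} [NormedAddCommGroup Q] [InnerProductSpace ℝ Q]

/-- The Fourier kernel on `ℝ × Q`, averaged over the reflection of `ℝ` and written in terms of the
square `y` of the first variable; `c` is a function such that `c (x ^ 2) = cos x`. -/
def evenFourierKernel (c : ℝ → ℝ) : WithLp 2 (ℝ × Q) × (ℝ × Q) → ℂ := fun x =>
  c ((2 * π * x.1.fst) ^ 2 * x.2.1) * Complex.exp ((2 * π * ⟪x.1.snd, x.2.2⟫ : ℝ) * Complex.I)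

theorem hasTemperateGrowth_evenFourierKernel {c : ℝ → ℝ} (hc : c.HasTemperateGrowth) :
    (evenFourierKernel (Q := Q) c).HasTemperateGrowth := by
  let V := WithLp 2 (ℝ × Q)
  let ofLp : V →L[ℝ] ℝ × Q := WithLp.prodContinuousLinearEquiv 2 ℝ ℝ Q
  have hw : (fun x : V × (ℝ × Q) => ofLp x.1).HasTemperateGrowth :=
    (ofLp.comp (.fst ℝ V (ℝ × Q))).hasTemperateGrowth
  have hy : (fun x : V × (ℝ × Q) => x.2).HasTemperateGrowth :=
    (ContinuousLinearMap.snd ℝ V (ℝ × Q)).hasTemperateGrowth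
  have hfst : (Prod.fst : ℝ × Q → ℝ).HasTemperateGrowth :=
    (ContinuousLinearMap.fst ℝ ℝ Q).hasTemperateGrowth
  have hsnd : (Prod.snd : ℝ × Q → Q).HasTemperateGrowth :=
    (ContinuousLinearMap.snd ℝ ℝ Q).hasTemperateGrowth
  have hcos := Function.Complex.hasTemperateGrowth_ofReal.comp <| hc.comp <|
    (((Function.HasTemperateGrowth.const (2 * π)).mul (hfst.comp hw)).pow 2).mul (hfst.comp hy)
  have hexp := hasTemperateGrowth_cexp_mul_I.comp <|
    (Function.HasTemperateGrowth.const (2 * π)).mul <|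
      ContinuousLinearMap.bilinear_hasTemperateGrowth (innerSL ℝ) (hsnd.comp hw) (hsnd.comp hy)
  exact hcos.mul hexp

theorem evenFourierKernel_sq {c : ℝ → ℝ} (hc : ∀ x, c (x ^ 2) = cos x) (w : WithLp 2 (ℝ × Q))
    (s : ℝ) (q : Q) :
    evenFourierKernel c (w, s ^ 2, q) =
      (Complex.exp ((2 * π * ⟪w, WithLp.toLp 2 (s, q)⟫ : ℝ) * Complex.I) +
        Complex.exp ((2 * π * ⟪w, WithLp.toLp 2 (-s, q)⟫ : ℝ) * Complex.I)) / 2 := by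
  simp only [evenFourierKernel, ← mul_pow, hc, Complex.ofReal_cos, Complex.cos,
    WithLp.prod_inner_apply, div_mul_eq_mul_div, add_mul, ← Complex.exp_add]
  congr 3 <;> simp <;> ring

/- Fourier inversion writes `g` as a superposition of waves, and the even part of a wave is smooth
in `s ^ 2`. -/
theorem exists_contDiff_sq_of_hasCompactSupport [FiniteDimensional ℝ Q] {g : ℝ × Q → ℝ}
    (hg : ContDiff ℝ ∞ g) (hsupp : HasCompactSupport g) :
    ∃ h : ℝ × Q → ℝ, ContDiff ℝ ∞ h ∧ ∀ s q, h (s ^ 2, q) = (g (s, q) + g (-s, q)) / 2 := by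
  borelize Q
  obtain ⟨c, hc, hcos⟩ := exists_hasTemperateGrowth_sq_eq_cos
  let e := WithLp.prodContinuousLinearEquiv 2 ℝ ℝ Q
  let S : 𝓢(WithLp 2 (ℝ × Q), ℂ) :=
    ((hsupp.comp_homeomorph e.toHomeomorph).comp_left Complex.ofReal_zero).toSchwartzMap
      (Complex.ofRealCLM.contDiff.comp (hg.comp e.contDiff))
  let wave (x : ℝ × Q) (w : WithLp 2 (ℝ × Q)) : ℂ :=
    Complex.exp ((2 * π * ⟪w, WithLp.toLp 2 x⟫ : ℝ) * Complex.I) * (𝓕 S) w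
  have hinv (x : ℝ × Q) : (g x : ℂ) = ∫ w, wave x w := by
    have : (𝓕⁻ (𝓕 S)) (WithLp.toLp 2 x) = (g x : ℂ) := by
      rw [FourierTransform.fourierInv_fourier_eq]
      rfl
    rw [← this, SchwartzMap.fourierInv_coe, Real.fourierInv_eq']
    rfl
  have hwave (x : ℝ × Q) : Integrable (wave x) := by
    refine (𝓕 S).integrable.mono (by fun_prop) (.of_forall fun w => ?_)
    simp only [wave, norm_mul, Complex.norm_exp_ofReal_mul_I, one_mul, le_refl]
  have heven (s : ℝ) (q : Q) : ∫ w, (𝓕 S) w * evenFourierKernel c (w, s ^ 2, q) =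
      ((g (s, q) + g (-s, q)) / 2 : ℝ) := by
    push_cast
    rw [hinv, hinv, ← integral_add (hwave _) (hwave _), ← integral_div]
    refine integral_congr_ae (.of_forall fun w => ?_)
    simp only [evenFourierKernel_sq hcos, wave]
    ring
  exact ⟨fun y => (∫ w, (𝓕 S) w * evenFourierKernel c (w, y)).re,
    Complex.reCLM.contDiff.comp (contDiff_integral_schwartz_bilin volume (𝓕 S)
      (hasTemperateGrowth_evenFourierKernel hc) (.mul ℝ ℂ)),
    fun s q => by simp only [heven, Complex.ofReal_re]⟩

end EvenPart

variable {Q F : Type u} [NormedAddCommGroup Q] [NormedSpace ℝ Q] [FiniteDimensional ℝ Q]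
  [NormedAddCommGroup F] [NormedSpace ℝ F] [FiniteDimensional ℝ F]

theorem exists_contDiff_even_part {g : ℝ × Q → ℝ} (hg : ContDiff ℝ ∞ g) :
    ∃ h : ℝ × Q → ℝ, ContDiff ℝ ∞ h ∧
      ∀ᶠ x in 𝓝 (0 : ℝ × Q), h (x.1 ^ 2, x.2) = (g x + g (-x.1, x.2)) / 2 := by
  let e : Q ≃L[ℝ] EuclideanSpace ℝ (Fin (Module.finrank ℝ Q)) := toEuclidean
  let χ : ContDiffBump (0 : ℝ × Q) := ⟨1, 2, one_pos, one_lt_two⟩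
  let e' := (ContinuousLinearEquiv.refl ℝ ℝ).prodCongr e.symm
  have hsupp : HasCompactSupport (fun x => χ (e' x) * g (e' x)) :=
    χ.hasCompactSupport.mul_right.comp_homeomorph e'.toHomeomorph
  obtain ⟨h, hh, heq⟩ := exists_contDiff_sq_of_hasCompactSupport
    ((χ.contDiff.mul hg).comp e'.contDiff) hsupp
  refine ⟨fun x => h (x.1, e x.2), hh.comp (by fun_prop), ?_⟩
  have hχ : ∀ᶠ x in 𝓝 (0 : ℝ × Q), χ x = 1 := χ.eventuallyEq_one
  have hneg : Tendsto (fun x : ℝ × Q => (-x.1, x.2)) (𝓝 0) (𝓝 0) := by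
    simpa using! (by fun_prop : Continuous fun x : ℝ × Q => (-x.1, x.2)).tendsto 0
  filter_upwards [hχ, hneg.eventually hχ] with x hx hx'
  simp [heq, e', hx, hx']

theorem exists_contDiff_even_part_vector {g : ℝ × Q → F} (hg : ContDiff ℝ ∞ g) :
    ∃ h : ℝ × Q → F, ContDiff ℝ ∞ h ∧
      ∀ᶠ x in 𝓝 (0 : ℝ × Q), h (x.1 ^ 2, x.2) = (2⁻¹ : ℝ) • (g x + g (-x.1, x.2)) := by
  let b := Module.finBasis ℝ F
  have hcoord (i) : ContDiff ℝ ∞ fun x => b.equivFunL (g x) i :=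
    contDiff_pi.1 (b.equivFunL.contDiff.comp hg) i
  choose h hh heq using fun i => exists_contDiff_even_part (hcoord i)
  refine ⟨fun x => b.equivFunL.symm fun i => h i x,
    b.equivFunL.symm.contDiff.comp (contDiff_pi.2 hh), ?_⟩
  filter_upwards [eventually_all.2 heq] with x hx
  rw [ContinuousLinearEquiv.symm_apply_eq]
  ext i
  simp only [hx i, map_smul, map_add, Pi.smul_apply, Pi.add_apply, smul_eq_mul]
  ring

theorem exists_contDiff_even_odd {g : ℝ × Q → F} (hg : ContDiff ℝ ∞ g) :
    ∃ h k : ℝ × Q → F, ContDiff ℝ ∞ h ∧ ContDiff ℝ ∞ k ∧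
      ∀ᶠ x in 𝓝 (0 : ℝ × Q), g x = h (x.1 ^ 2, x.2) + x.1 • k (x.1 ^ 2, x.2) := by
  have : CompleteSpace F := FiniteDimensional.complete ℝ F
  obtain ⟨h, hh, heven⟩ := exists_contDiff_even_part_vector hg
  obtain ⟨l, hl, hslope, -⟩ := exists_contDiff_slope hg
  obtain ⟨k, hk, hodd⟩ := exists_contDiff_even_part_vector
    (g := fun x : ℝ × Q => l (x.1, (0, x.2), (1, 0))) (hl.comp (by fun_prop))
  refine ⟨h, k, hh, hk, ?_⟩
  filter_upwards [heven, hodd] with ⟨s, q⟩ h₁ h₂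
  have hs := hslope s (0, q) (1, 0)
  have hs' := hslope (-s) (0, q) (1, 0)
  simp only [Prod.smul_mk, Prod.mk_add_mk, smul_eq_mul, mul_one, zero_add, smul_zero,
    add_zero] at hs hs'
  simp only at h₁ h₂ ⊢
  rw [h₁, h₂, hs, hs']
  module

end Whitney

section LocalDiffeo

universe u v

variable {E : Type u} [NormedAddCommGroup E] [NormedSpace ℝ E]
  {F : Type v} [NormedAddCommGroup F] [NormedSpace ℝ F]

theorem exists_contDiff_eventuallyEq [FiniteDimensional ℝ E] {f : E → F} {p : E} {U : Set E}
    (hU : U ∈ 𝓝 p) (hf : ContDiffOn ℝ ∞ f U) : ∃ g : E → F, ContDiff ℝ ∞ g ∧ g =ᶠ[𝓝 p] f := by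
  obtain ⟨ε, hε, hεU⟩ := Metric.mem_nhds_iff.1 hU
  let χ : ContDiffBump p := ⟨ε / 4, ε / 2, by positivity, by linarith⟩
  refine ⟨fun x => χ x • f x, contDiff_iff_contDiffAt.2 fun x => ?_, ?_⟩
  · by_cases hx : x ∈ Metric.ball p ε
    · exact χ.contDiffAt.smul ((hf.mono hεU).contDiffAt (Metric.isOpen_ball.mem_nhds hx))
    · have hx' : x ∉ tsupport χ := fun h => hx <| by
        rw [χ.tsupport_eq] at h
        exact Metric.closedBall_subset_ball (by change ε / 2 < ε; linarith) h
      have hzero : (fun x => χ x • f x) =ᶠ[𝓝 x] fun _ => 0 := by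
        filter_upwards [notMem_tsupport_iff_eventuallyEq.1 hx'] with y hy
        simp [hy]
      exact contDiffAt_const.congr_of_eventuallyEq hzero
  · filter_upwards [χ.eventuallyEq_one] with x hx
    simp [hx]

theorem exists_contDiff_comp_eventuallyEq [FiniteDimensional ℝ E] {G : Type*}
    [NormedAddCommGroup G] [NormedSpace ℝ G] {φ : F → G} {c : E → F} {p : E}
    (hc : ContDiff ℝ ∞ c) (hφ : ∀ᶠ y in 𝓝 (c p), ContDiffAt ℝ ∞ φ y) :
    ∃ r : E → G, ContDiff ℝ ∞ r ∧ r =ᶠ[𝓝 p] φ ∘ c :=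
  exists_contDiff_eventuallyEq (hc.continuous.continuousAt.eventually hφ)
    fun x (hx : ContDiffAt ℝ ∞ φ (c x)) => (hx.comp x hc.contDiffAt).contDiffWithinAt

theorem exists_contDiff_local_inverse [FiniteDimensional ℝ E] [FiniteDimensional ℝ F]
    {f : E → F} {p : E} (hf : ContDiff ℝ ∞ f) {e : E ≃L[ℝ] F}
    (he : HasFDerivAt f (e : E →L[ℝ] F) p) : ∃ g : F → E, ContDiff ℝ ∞ g ∧ g (f p) = p ∧
      (∀ᶠ x in 𝓝 p, g (f x) = x) ∧ ∀ᶠ y in 𝓝 (f p), f (g y) = y := by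
  have : CompleteSpace E := FiniteDimensional.complete ℝ E
  have hn : (∞ : WithTop ℕ∞) ≠ 0 := by simp
  let o := hf.contDiffAt.toOpenPartialHomeomorph f he hn
  have hp : p ∈ o.source := hf.contDiffAt.mem_toOpenPartialHomeomorph_source he hn
  have hfp : f p ∈ o.target := hf.contDiffAt.image_mem_toOpenPartialHomeomorph_target he hn
  have hequiv : ∀ᶠ x in 𝓝 p, ∃ e' : E ≃L[ℝ] F, HasFDerivAt f (e' : E →L[ℝ] F) x := by
    have hev := ((hf.continuous_fderiv (by simp)).continuousAt (x := p)).eventually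
      (by rw [he.fderiv]; exact ContinuousLinearEquiv.nhds e)
    filter_upwards [hev] with x ⟨e', he'⟩
    exact ⟨e', he' ▸ (hf.differentiable (by simp) x).hasFDerivAt⟩
  have hsymm : ∀ᶠ y in 𝓝 (f p), ContDiffAt ℝ ∞ o.symm y := by
    have htendsto : Tendsto o.symm (𝓝 (f p)) (𝓝 p) := o.tendsto_symm hp
    filter_upwards [htendsto.eventually hequiv, o.open_target.mem_nhds hfp] with y ⟨e', he'⟩ hy
    exact o.contDiffAt_symm hy he' hf.contDiffAt
  obtain ⟨g, hg, hgo⟩ := exists_contDiff_eventuallyEq (f := o.symm) hsymm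
    (fun y hy => ContDiffAt.contDiffWithinAt (n := ∞) hy)
  have hleft : ∀ x ∈ o.source, o.symm (f x) = x := fun x hx => o.left_inv hx
  refine ⟨g, hg, by rw [hgo.eq_of_nhds, hleft p hp], ?_, ?_⟩
  · filter_upwards [hf.continuous.continuousAt.eventually hgo, o.open_source.mem_nhds hp]
      with x hx hxo
    rw [hx, hleft x hxo]
  · filter_upwards [hgo, o.open_target.mem_nhds hfp] with y hy hyo
    rw [hy]
    exact o.right_inv hyo

theorem isLocalDiffeoAt_of_eventually_inverse {f : E → F} {g : F → E} {p : E}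
    (hf : ContDiff ℝ ∞ f) (hg : ContDiff ℝ ∞ g) (hgf : ∀ᶠ x in 𝓝 p, g (f x) = x)
    (hfg : ∀ᶠ y in 𝓝 (f p), f (g y) = y) : IsLocalDiffeoAt f p := by
  obtain ⟨U, hU, hUo, hpU⟩ := eventually_nhds_iff.1 hgf
  obtain ⟨V, hV, hVo, hpV⟩ := eventually_nhds_iff.1 hfg
  refine ⟨U ∩ f ⁻¹' V, V ∩ g ⁻¹' U, g, hUo.inter (hVo.preimage hf.continuous), ⟨hpU, hpV⟩,
    hVo.inter (hUo.preimage hg.continuous), ⟨hpV, ?_⟩, hf.contDiffOn, hg.contDiffOn,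
    fun x hx => ⟨hx.2, ?_⟩, fun y hy => ⟨hy.2, ?_⟩, fun x hx => hU x hx.1, fun y hy => hV y hy.1⟩
  · simpa [hU p hpU] using hpU
  · simpa [hU x hx.1] using hx.1
  · simpa [hV y hy.1] using hy.1

theorem isLocalDiffeoAt_of_injective_fderiv [FiniteDimensional ℝ E] {f : E → E} {p : E}
    (hf : ContDiff ℝ ∞ f) (hi : Function.Injective (fderiv ℝ f p)) : IsLocalDiffeoAt f p := by
  let e : E ≃L[ℝ] E :=
    (LinearEquiv.ofInjectiveEndo (fderiv ℝ f p).toLinearMap hi).toContinuousLinearEquiv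
  have he : HasFDerivAt f (e : E →L[ℝ] E) p := (hf.differentiable (by simp) p).hasFDerivAt
  obtain ⟨g, hg, -, hgf, hfg⟩ := exists_contDiff_local_inverse hf he
  exact isLocalDiffeoAt_of_eventually_inverse hf hg hgf hfg

theorem IsLocalDiffeoAt.exists_contDiff_eventuallyEq [FiniteDimensional ℝ E] {f : E → F} {p : E}
    (hf : IsLocalDiffeoAt f p) :
    ∃ g : E → F, ContDiff ℝ ∞ g ∧ g =ᶠ[𝓝 p] f ∧ Function.Injective (fderiv ℝ g p) := by
  obtain ⟨U, V, f', hU, hpU, hV, hpV, hfU, hfV, -, -, hleft, -⟩ := hf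
  obtain ⟨g, hg, hgf⟩ := _root_.exists_contDiff_eventuallyEq (hU.mem_nhds hpU) hfU
  refine ⟨g, hg, hgf, ?_⟩
  have hdg : HasFDerivAt g (fderiv ℝ g p) p := (hg.differentiable (by simp) p).hasFDerivAt
  have hdf' : HasFDerivAt f' (fderiv ℝ f' (f p)) (g p) := by
    rw [hgf.eq_of_nhds]
    exact ((hfV.contDiffAt (hV.mem_nhds hpV)).differentiableAt (by simp)).hasFDerivAt
  have hid : f' ∘ g =ᶠ[𝓝 p] id := by
    filter_upwards [hgf, hU.mem_nhds hpU] with x hx hxU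
    simp [hx, hleft x hxU]
  have hcomp := ((hdf'.comp p hdg).congr_of_eventuallyEq hid.symm).unique (hasFDerivAt_id p)
  exact Function.LeftInverse.injective (g := fderiv ℝ f' (f p)) fun v => DFunLike.congr_fun hcomp v

theorem IsLocalDiffeoAt.continuousLinearEquiv_comp {f : E → F} {p : E} (hf : IsLocalDiffeoAt f p)
    (L : F ≃L[ℝ] F) : IsLocalDiffeoAt (L ∘ f) p := by
  obtain ⟨U, V, f', hU, hpU, hV, hpV, hfU, hfV, hUV, hVU, hleft, hright⟩ := hf
  refine ⟨U, L.symm ⁻¹' V, f' ∘ L.symm, hU, hpU, hV.preimage L.symm.continuous, by simpa using hpV,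
    L.contDiff.comp_contDiffOn hfU, hfV.comp L.symm.contDiff.contDiffOn fun y hy => hy,
    fun x hx => by simpa using hUV hx, fun y hy => hVU hy, fun x hx => by simpa using hleft x hx,
    fun y hy => ?_⟩
  simp [hright _ hy]

end LocalDiffeo

section AEquiv

theorem aequiv_iff_exists_contDiff {f g : R2 → R3} (hf : Continuous f) {p q : R2} :
    AEquiv f p g q ↔ ∃ (Φ : R2 → R2) (Ψ : R3 → R3), ContDiff ℝ ∞ Φ ∧ ContDiff ℝ ∞ Ψ ∧ Φ 0 = 0 ∧
      Function.Injective (fderiv ℝ Φ 0) ∧ Function.Injective (fderiv ℝ Ψ 0) ∧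
      ∀ᶠ x in 𝓝 0, Ψ (f (p + x) - f p) = g (q + Φ x) - g q := by
  constructor
  · rintro ⟨Φ, Ψ, hΦ, rfl, hΨ, -, hev⟩
    obtain ⟨Φ', hΦ', hΦe, hΦi⟩ := hΦ.exists_contDiff_eventuallyEq
    obtain ⟨Ψ', hΨ', hΨe, hΨi⟩ := hΨ.exists_contDiff_eventuallyEq
    have ht : Tendsto (p + ·) (𝓝 0) (𝓝 p) := (continuous_const_add p).tendsto' _ _ (add_zero p)
    refine ⟨fun x => Φ' (p + x) - Φ p, fun y => Ψ' (f p + y) - g (Φ p), by fun_prop, by fun_prop,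
      by simp [hΦe.eq_of_nhds], ?_, ?_, ?_⟩
    · rw [fderiv_sub_const, fderiv_comp_add_left, add_zero]
      exact hΦi
    · rw [fderiv_sub_const, fderiv_comp_add_left, add_zero]
      exact hΨi
    · filter_upwards [ht.eventually hev, ht.eventually hΦe,
        ht.eventually (hf.continuousAt.eventually hΨe)] with x hx hΦx hΨx
      simp [hΦx, hΨx, hx]
  · rintro ⟨Φ, Ψ, hΦ, hΨ, hΦ0, hΦi, hΨi, hev⟩
    have hΨ0 : Ψ 0 = 0 := by simpa [hΦ0] using hev.self_of_nhds
    have ht : Tendsto (· - p) (𝓝 p) (𝓝 0) := (continuous_sub_right p).tendsto' _ _ (sub_self p)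
    refine ⟨fun x => q + Φ (x - p), fun y => g q + Ψ (y - f p),
      isLocalDiffeoAt_of_injective_fderiv (by fun_prop) ?_, by simp [hΦ0],
      isLocalDiffeoAt_of_injective_fderiv (by fun_prop) ?_, by simp [hΨ0], ?_⟩
    · simpa [fderiv_comp_sub] using hΦi
    · simpa [fderiv_comp_sub] using hΨi
    · filter_upwards [ht.eventually hev] with x hx
      simp only [add_sub_cancel] at hx
      simp [hx]

theorem AEquiv.comp_continuousLinearEquiv {f g g' : R2 → R3} {p q : R2} (h : AEquiv f p g q)
    (L : R2 ≃L[ℝ] R2) (M : R3 ≃L[ℝ] R3) (hLM : ∀ x, g' (L x) = M (g x)) :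
    AEquiv f p g' (L q) := by
  obtain ⟨Φ, Ψ, hΦ, rfl, hΨ, hΨp, hev⟩ := h
  refine ⟨L ∘ Φ, M ∘ Ψ, hΦ.continuousLinearEquiv_comp L, rfl, hΨ.continuousLinearEquiv_comp M,
    by simp [hΨp, hLM], ?_⟩
  filter_upwards [hev] with x hx
  simp [hx, hLM]

theorem aequiv_comp_continuousLinearEquiv_iff {f g g' : R2 → R3} {p q : R2}
    (L : R2 ≃L[ℝ] R2) (M : R3 ≃L[ℝ] R3) (hLM : ∀ x, g' (L x) = M (g x)) :
    AEquiv f p g' (L q) ↔ AEquiv f p g q :=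
  ⟨fun h => by
    simpa using h.comp_continuousLinearEquiv L.symm M.symm fun x => by
      rw [M.eq_symm_apply, ← hLM, L.apply_symm_apply],
    fun h => h.comp_continuousLinearEquiv L M hLM⟩

/-- The sum of two planar cusps in a common space: a form of the `D₄⁺` singularity in which the two
variables separate. -/
def cuspSum (q : R2) : R3 := (q.1 ^ 2, q.2 ^ 2, q.1 ^ 3 + q.2 ^ 3)

/-- The source coordinate change carrying `fD4p` to `cuspSum`. It is read off the identity
`(√3 v + u) ^ 3 + (√3 v - u) ^ 3 = 6 √3 (u ^ 2 v + v ^ 3)`. -/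
def cuspSumSourceEquiv : R2 ≃ₗ[ℝ] R2 where
  toFun q := (√3 * q.2 + q.1, √3 * q.2 - q.1)
  invFun q := ((q.1 - q.2) / 2, (q.1 + q.2) / (2 * √3))
  map_add' _ _ := by ext <;> simp <;> ring
  map_smul' _ _ := by ext <;> simp <;> ring
  left_inv _ := by ext <;> simp; field_simp; ring
  right_inv _ := by ext <;> simp <;> field_simp <;> ring

/-- The target coordinate change that goes with `cuspSumSourceEquiv`. -/
def cuspSumTargetEquiv : R3 ≃ₗ[ℝ] R3 where
  toFun P := (P.2.1 + 2 * √3 * P.1, P.2.1 - 2 * √3 * P.1, 6 * √3 * P.2.2)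
  invFun P := ((P.1 - P.2.1) / (4 * √3), (P.1 + P.2.1) / 2, P.2.2 / (6 * √3))
  map_add' _ _ := by ext <;> simp <;> ring
  map_smul' _ _ := by ext <;> simp <;> ring
  left_inv _ := by ext <;> simp; field_simp; ring
  right_inv _ := by ext <;> simp <;> field_simp <;> ring

theorem cuspSum_sourceEquiv (q : R2) :
    cuspSum (cuspSumSourceEquiv q) = cuspSumTargetEquiv (fD4p q) := by
  have h : √3 ^ 2 = 3 := Real.sq_sqrt (by norm_num)
  refine Prod.ext ?_ (Prod.ext ?_ ?_) <;>
    simp only [cuspSum, fD4p, cuspSumSourceEquiv, cuspSumTargetEquiv, LinearEquiv.coe_mk,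
      LinearMap.coe_mk, AddHom.coe_mk]
  · linear_combination q.2 ^ 2 * h
  · linear_combination q.2 ^ 2 * h
  · linear_combination 2 * √3 * q.2 ^ 3 * h

theorem aequiv_cuspSum_iff_aequiv_fD4p {f : R2 → R3} {p : R2} :
    AEquiv f p cuspSum 0 ↔ AEquiv f p fD4p 0 := by
  rw [← aequiv_comp_continuousLinearEquiv_iff (f := f) (p := p) (q := 0)
    cuspSumSourceEquiv.toContinuousLinearEquiv
    cuspSumTargetEquiv.toContinuousLinearEquiv cuspSum_sourceEquiv, map_zero]

end AEquiv

section Fold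

universe u

variable {E : Type u} [NormedAddCommGroup E] [NormedSpace ℝ E]
  {Q : Type u} [NormedAddCommGroup Q] [NormedSpace ℝ Q] [FiniteDimensional ℝ Q]
  {G : Type u} [NormedAddCommGroup G] [NormedSpace ℝ G] [FiniteDimensional ℝ G]

/-- Coordinates `T` on the target in which the fold `P` is `(u, y) ↦ (s ^ 2, y + u ^ 2 • ε)`, where
`s = u * r (u, y)` agrees with `u` to first order. -/
structure IsFoldChart (P : ℝ × Q → E) (T : E → ℝ × Q) (r : ℝ × Q → ℝ) (ε : ℝ × Q → Q) : Prop where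
  contDiff_target : ContDiff ℝ ∞ T
  contDiff_scale : ContDiff ℝ ∞ r
  contDiff_shift : ContDiff ℝ ∞ ε
  scale_zero : r 0 = 1
  eventually_eq : ∀ᶠ w in 𝓝 0, T (P w) = ((w.1 * r w) ^ 2, w.2 + w.1 ^ 2 • ε w)

theorem exists_fold_coordinates [FiniteDimensional ℝ E] {B : Q → E} (hB : ContDiff ℝ ∞ B)
    (hB0 : B 0 = 0) {z : ℝ × Q → E} (hz : ContDiff ℝ ∞ z) {e : (ℝ × Q) ≃L[ℝ] E}
    (he : e (1, 0) = z 0)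
    (hBd : HasFDerivAt B ((e : ℝ × Q →L[ℝ] E) ∘L ContinuousLinearMap.inr ℝ ℝ Q) 0) :
    ∃ (T : E → ℝ × Q) (δ : ℝ × Q → ℝ × Q), ContDiff ℝ ∞ T ∧ ContDiff ℝ ∞ δ ∧ T 0 = 0 ∧
      HasFDerivAt T (e.symm : E →L[ℝ] ℝ × Q) 0 ∧ δ 0 = (1, 0) ∧
      ∀ᶠ w in 𝓝 0, T (B w.2 + w.1 ^ 2 • z w) = (0, w.2) + w.1 ^ 2 • δ w := by
  let Θ : ℝ × Q → E := fun x => B x.2 + x.1 • z 0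
  have hΘ0 : Θ 0 = 0 := by simp [Θ, hB0]
  have hΘd : HasFDerivAt Θ (e : ℝ × Q →L[ℝ] E) 0 := by
    have h := (hBd.comp (0 : ℝ × Q) hasFDerivAt_snd).add
      ((hasFDerivAt_fst (𝕜 := ℝ) (p := (0 : ℝ × Q))).smul_const (z 0))
    convert! h using 1
    ext <;> simp [he]
  obtain ⟨T, hT, hT0, hTΘ, hΘT⟩ := exists_contDiff_local_inverse (by fun_prop) hΘd
  rw [hΘ0] at hT0 hΘT
  have hTd : HasFDerivAt T (e.symm : E →L[ℝ] ℝ × Q) 0 :=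
    HasFDerivAt.of_local_left_inverse hT.continuous.continuousAt (by rwa [hT0]) hΘT
  obtain ⟨k, hk, hTk, hk0⟩ := exists_contDiff_slope hT
  refine ⟨T, fun w => k (w.1 ^ 2, B w.2, z w), hT, by fun_prop, hT0, hTd, ?_, ?_⟩
  · simp [hB0, hk0, hTd.fderiv, ← he]
  · have hinr : Tendsto (fun w : ℝ × Q => ((0 : ℝ), w.2)) (𝓝 0) (𝓝 0) :=
      (by fun_prop : Continuous fun w : ℝ × Q => ((0 : ℝ), w.2)).tendsto' _ _ rfl
    filter_upwards [hinr.eventually hTΘ] with w hw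
    simp only [Θ, zero_smul, add_zero] at hw
    rw [hTk, hw]

theorem exists_isFoldChart [FiniteDimensional ℝ E] {B : Q → E} (hB : ContDiff ℝ ∞ B)
    (hB0 : B 0 = 0) {z : ℝ × Q → E} (hz : ContDiff ℝ ∞ z) {e : (ℝ × Q) ≃L[ℝ] E}
    (he : e (1, 0) = z 0)
    (hBd : HasFDerivAt B ((e : ℝ × Q →L[ℝ] E) ∘L ContinuousLinearMap.inr ℝ ℝ Q) 0) :
    ∃ T r ε, IsFoldChart (fun w => B w.2 + w.1 ^ 2 • z w) T r ε ∧ T 0 = 0 ∧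
      HasFDerivAt T (e.symm : E →L[ℝ] ℝ × Q) 0 := by
  obtain ⟨T, δ, hT, hδ, hT0, hTd, hδ0, hTP⟩ := exists_fold_coordinates hB hB0 hz he hBd
  have hδ1 : ContDiff ℝ ∞ fun w => (δ w).1 := by fun_prop
  have hδ01 : (δ 0).1 = 1 := by rw [hδ0]
  have hpos : ∀ᶠ t in 𝓝 (δ 0).1, 0 < t := by
    rw [hδ01]
    exact eventually_gt_nhds one_pos
  obtain ⟨r, hr, hrδ⟩ := exists_contDiff_comp_eventuallyEq (φ := Real.sqrt) (p := 0) hδ1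
    (hpos.mono fun t ht => contDiffAt_sqrt ht.ne')
  refine ⟨T, r, fun w => (δ w).2, ⟨hT, hr, by fun_prop, ?_, ?_⟩, hT0, hTd⟩
  · simp [hrδ.eq_of_nhds, hδ01]
  · filter_upwards [hTP, hrδ, hδ1.continuous.continuousAt.eventually hpos] with w hw hrw hw0
    simp [hw, hrw, mul_pow, Real.sq_sqrt hw0.le, Prod.ext_iff]

namespace IsFoldChart

variable {P : ℝ × Q → E} {T : E → ℝ × Q} {r : ℝ × Q → ℝ} {ε : ℝ × Q → Q}

theorem exists_source_inverse (h : IsFoldChart P T r ε) :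
    ∃ ρ : ℝ × Q → ℝ × Q, ContDiff ℝ ∞ ρ ∧
      ∀ᶠ w in 𝓝 0, ρ (w.1 * r w, w.2 + w.1 ^ 2 • ε w) = w := by
  have hr := h.contDiff_scale
  have hε := h.contDiff_shift
  have hσd : HasFDerivAt (fun w : ℝ × Q => (w.1 * r w, w.2 + w.1 ^ 2 • ε w))
      (ContinuousLinearEquiv.refl ℝ (ℝ × Q) : ℝ × Q →L[ℝ] ℝ × Q) 0 := by
    have hfst := hasFDerivAt_fst (𝕜 := ℝ) (p := (0 : ℝ × Q))
    have hscale := hfst.mul (hr.differentiable (by simp) 0).hasFDerivAt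
    have hshift := hasFDerivAt_snd.add
      ((hfst.pow 2).smul (hε.differentiable (by simp) 0).hasFDerivAt)
    convert! hscale.prodMk hshift using 1
    ext <;> simp [h.scale_zero]
  obtain ⟨ρ, hρ, -, hρσ, -⟩ := exists_contDiff_local_inverse (by fun_prop) hσd
  exact ⟨ρ, hρ, hρσ⟩

theorem exists_eq_comp_add_smul_comp (h : IsFoldChart P T r ε) {N : ℝ × Q → G}
    (hN : ContDiff ℝ ∞ N) : ∃ m k : E → G, ContDiff ℝ ∞ m ∧ ContDiff ℝ ∞ k ∧
      ∀ᶠ w in 𝓝 0, N w = m (P w) + (w.1 * r w) • k (P w) := by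
  obtain ⟨ρ, hρ, hρσ⟩ := h.exists_source_inverse
  obtain ⟨m, k, hm, hk, hmk⟩ := exists_contDiff_even_odd (hN.comp hρ)
  have hr := h.contDiff_scale
  have hε := h.contDiff_shift
  have hσ : Tendsto (fun w : ℝ × Q => (w.1 * r w, w.2 + w.1 ^ 2 • ε w)) (𝓝 0) (𝓝 0) :=
    (by fun_prop : Continuous fun w : ℝ × Q => (w.1 * r w, w.2 + w.1 ^ 2 • ε w)).tendsto' _ _
      (by simp)
  refine ⟨m ∘ T, k ∘ T, hm.comp h.contDiff_target, hk.comp h.contDiff_target, ?_⟩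
  filter_upwards [hσ.eventually hmk, hρσ, h.eventually_eq] with w hw hρw hTw
  simpa [hρw, hTw] using hw

theorem exists_add_sq_smul_eq (h : IsFoldChart P T r ε) {τ : Q → G} (hτ : ContDiff ℝ ∞ τ)
    {N : ℝ × Q → G} (hN : ContDiff ℝ ∞ N) : ∃ m k : E → G, ContDiff ℝ ∞ m ∧ ContDiff ℝ ∞ k ∧
      ∀ᶠ w in 𝓝 0, τ w.2 + w.1 ^ 2 • N w = m (P w) + (w.1 * r w) ^ 3 • k (P w) := by
  have hr := h.contDiff_scale
  have hε := h.contDiff_shift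
  have hT := h.contDiff_target
  obtain ⟨L, hL, hτL, -⟩ := exists_contDiff_slope hτ
  have hne : ∀ᶠ t in 𝓝 (r 0), t ≠ 0 := by
    rw [h.scale_zero]
    exact eventually_ne_nhds one_ne_zero
  obtain ⟨ι, hι, hιr⟩ := exists_contDiff_comp_eventuallyEq (φ := Inv.inv) (p := 0) hr
    (hne.mono fun t ht => contDiffAt_inv ℝ ht)
  let M : ℝ × Q → G := fun w =>
    ι w ^ 2 • (N w - L (w.1 ^ 2, w.2, ε w))
  obtain ⟨m, k, hm, hk, hmk⟩ := h.exists_eq_comp_add_smul_comp (N := M) (by fun_prop)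
  refine ⟨fun p => τ (T p).2 + (T p).1 • m p, k, by fun_prop, hk, ?_⟩
  filter_upwards [hmk, h.eventually_eq, hιr, hr.continuous.continuousAt.eventually hne]
    with w hw hTw hιw hrw
  have hsq : w.1 ^ 2 • (N w - L (w.1 ^ 2, w.2, ε w)) = (w.1 * r w) ^ 2 • M w := by
    simp only [M, hιw, Function.comp_apply, smul_smul, mul_pow]
    field_simp
  simp only [hTw, hτL]
  calc τ w.2 + w.1 ^ 2 • N w
      = τ w.2 + w.1 ^ 2 • L (w.1 ^ 2, w.2, ε w) +
          w.1 ^ 2 • (N w - L (w.1 ^ 2, w.2, ε w)) := by module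
    _ = _ := by rw [hsq, hw]; module

end IsFoldChart

end Fold

section Cusp

universe u

variable {E F : Type u} [NormedAddCommGroup E] [NormedSpace ℝ E]
  [NormedAddCommGroup F] [NormedSpace ℝ F]

theorem hasDerivAt_even_add_odd {h k : ℝ → F} (hh : Differentiable ℝ h)
    (hk : Differentiable ℝ k) : HasDerivAt (fun u => h (u ^ 2) + u • k (u ^ 2)) (k 0) 0 := by
  have hsq : HasDerivAt (fun u : ℝ => u ^ 2) 0 0 := by simpa using hasDerivAt_pow 2 (0 : ℝ)
  have heven {c : ℝ → F} (hc : Differentiable ℝ c) : HasDerivAt (fun u => c (u ^ 2)) 0 0 := by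
    simpa using! (hc 0).hasDerivAt.scomp_of_eq (0 : ℝ) hsq (by simp)
  simpa using! (heven hh).add ((hasDerivAt_id (0 : ℝ)).smul (heven hk))

theorem exists_contDiff_factor_cusp [FiniteDimensional ℝ F] {z : ℝ → F} (hz : ContDiff ℝ ∞ z) :
    ∃ A : R2 → F, ContDiff ℝ ∞ A ∧ A 0 = 0 ∧
      HasFDerivAt A ((ContinuousLinearMap.fst ℝ ℝ ℝ).smulRight (z 0) +
        (ContinuousLinearMap.snd ℝ ℝ ℝ).smulRight (deriv z 0)) 0 ∧
      ∀ᶠ u in 𝓝 (0 : ℝ), A (u ^ 2, u ^ 3) = u ^ 2 • z u := by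
  obtain ⟨h, k, hh, hk, hhk⟩ := exists_contDiff_even_odd (g := fun x : ℝ × F => z x.1) (by fun_prop)
  have ht : Tendsto (fun u : ℝ => (u, (0 : F))) (𝓝 0) (𝓝 0) :=
    (by fun_prop : Continuous fun u : ℝ => (u, (0 : F))).tendsto' _ _ rfl
  have hzhk : z =ᶠ[𝓝 0] fun u => h (u ^ 2, 0) + u • k (u ^ 2, 0) := ht.eventually hhk
  have hh1 : ContDiff ℝ ∞ fun t : ℝ => h (t, 0) := by fun_prop
  have hk1 : ContDiff ℝ ∞ fun t : ℝ => k (t, 0) := by fun_prop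
  have hz0 : z 0 = h (0, 0) := by simpa using hzhk.eq_of_nhds
  have hz1 : deriv z 0 = k (0, 0) := by
    rw [hzhk.deriv_eq]
    exact (hasDerivAt_even_add_odd (hh1.differentiable (by simp))
      (hk1.differentiable (by simp))).deriv
  refine ⟨fun y => y.1 • h (y.1, 0) + y.2 • k (y.1, 0), by fun_prop, by simp, ?_, ?_⟩
  · have hhd : HasFDerivAt (fun y : R2 => h (y.1, 0)) _ 0 :=
      (ContDiff.differentiable (n := ∞) (by fun_prop) (by simp) _).hasFDerivAt
    have hkd : HasFDerivAt (fun y : R2 => k (y.1, 0)) _ 0 :=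
      (ContDiff.differentiable (n := ∞) (by fun_prop) (by simp) _).hasFDerivAt
    rw [hz0, hz1]
    simpa using! (hasFDerivAt_fst.smul hhd).add (hasFDerivAt_snd.smul hkd)
  · filter_upwards [hzhk] with u hu
    rw [hu]
    module

theorem fderiv_apply_of_eventually_sq_smul_eq [FiniteDimensional ℝ E] [CompleteSpace F] {m : E → F}
    {z : ℝ → E} {c : ℝ → F} (hm : ContDiff ℝ ∞ m) (hz : ContDiff ℝ ∞ z) (hc : ContDiff ℝ ∞ c)
    (h : ∀ᶠ u in 𝓝 (0 : ℝ), m (u ^ 2 • z u) = u ^ 2 • c u) :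
    fderiv ℝ m 0 (z 0) = c 0 ∧ fderiv ℝ m 0 (deriv z 0) = deriv c 0 := by
  obtain ⟨k, hk, hmk, hk0⟩ := exists_contDiff_slope hm
  have hm0 : m 0 = 0 := by simpa using h.self_of_nhds
  have hkc : (fun u => k (u ^ 2, 0, z u)) =ᶠ[𝓝 0] c := by
    refine (ContinuousAt.eventuallyEq_nhds_iff_eventuallyEq_nhdsNE
      (Continuous.continuousAt (by fun_prop)) hc.continuous.continuousAt).1 ?_
    filter_upwards [h.filter_mono nhdsWithin_le_nhds, self_mem_nhdsWithin] with u hu hu0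
    have hslope := hmk (u ^ 2) 0 (z u)
    rw [zero_add, hm0, zero_add, hu] at hslope
    exact (smul_right_injective F (pow_ne_zero 2 hu0) hslope).symm
  have hkd : HasFDerivAt k (fderiv ℝ k (0, 0, z 0)) (0, 0, z 0) :=
    (hk.differentiable (by simp) _).hasFDerivAt
  have hzd : HasDerivAt z (deriv z 0) 0 := (hz.differentiable (by simp) 0).hasDerivAt
  have hsq : HasDerivAt (fun u : ℝ => u ^ 2) 0 0 := by simpa using hasDerivAt_pow 2 (0 : ℝ)
  have hpath := hkd.comp_hasDerivAt_of_eq (0 : ℝ)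
    (hsq.prodMk ((hasDerivAt_const (0 : ℝ) (0 : E)).prodMk hzd)) (by simp)
  have hline := hkd.comp_hasDerivAt (0 : ℝ)
    ((hasDerivAt_const (0 : ℝ) (0 : ℝ)).prodMk ((hasDerivAt_const (0 : ℝ) (0 : E)).prodMk hzd))
  have hlinear := (fderiv ℝ m 0).hasFDerivAt.comp_hasDerivAt (0 : ℝ) hzd
  refine ⟨?_, ?_⟩
  · rw [← hk0, ← hkc.eq_of_nhds]
    simp
  · rw [← hkc.deriv_eq]
    refine Eq.trans ?_ hpath.deriv.symm
    refine hlinear.unique ?_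
    convert! hline using 1
    funext u
    simp [hk0]

end Cusp

section OddRoots

theorem surjective_pow_of_odd {n : ℕ} (hn : Odd n) : Function.Surjective fun x : ℝ => x ^ n := by
  have htop : Tendsto (fun x : ℝ => x ^ n) atTop atTop := tendsto_pow_atTop hn.pos.ne'
  refine (continuous_pow n).surjective htop ?_
  simpa [Function.comp_def, hn.neg_pow] using
    tendsto_neg_atTop_atBot.comp (htop.comp tendsto_neg_atBot_atTop)

theorem exists_contDiff_eventually_pow_eq_of_odd {E : Type*} [NormedAddCommGroup E]
    [NormedSpace ℝ E] [FiniteDimensional ℝ E] {k : E → ℝ} (hk : ContDiff ℝ ∞ k) {p : E}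
    (hkp : k p ≠ 0) {n : ℕ} (hn : Odd n) :
    ∃ l : E → ℝ, ContDiff ℝ ∞ l ∧ l p ≠ 0 ∧ ∀ᶠ x in 𝓝 p, l x ^ n = k x := by
  obtain ⟨d, hd : d ^ n = k p⟩ := surjective_pow_of_odd hn (k p)
  have hd0 : d ≠ 0 := by
    rintro rfl
    exact hkp (by rw [← hd, zero_pow hn.pos.ne'])
  have hquot : ContDiff ℝ ∞ fun x => k x / k p := by fun_prop
  have hpos : ∀ᶠ t in 𝓝 (k p / k p), 0 < t := by
    rw [div_self hkp]
    exact eventually_gt_nhds one_pos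
  obtain ⟨l, hl, hlk⟩ := exists_contDiff_comp_eventuallyEq (φ := fun t => t ^ (n : ℝ)⁻¹) hquot
    (hpos.mono fun t ht => contDiffAt_rpow_const_of_ne ht.ne')
  refine ⟨fun x => d * l x, by fun_prop, by simp [hlk.eq_of_nhds, hkp, hd0], ?_⟩
  filter_upwards [hlk, hquot.continuous.continuousAt.eventually hpos] with x hx hx0
  rw [mul_pow, hd, hx, Function.comp_apply, Real.rpow_inv_natCast_pow hx0.le hn.pos.ne']
  field_simp

end OddRoots

section CuspTranslation

theorem ext_of_linearIndependent {a b c : R3} (h : LinearIndependent ℝ ![a, b, c])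
    {L M : R3 →L[ℝ] ℝ} (ha : L a = M a) (hb : L b = M b) (hc : L c = M c) : L = M := by
  have hspan := h.span_eq_top_of_card_eq_finrank' (by simp)
  refine ContinuousLinearMap.coe_injective (LinearMap.ext_on_range hspan fun i => ?_)
  fin_cases i
  exacts [ha, hb, hc]

theorem exists_continuousLinearEquiv_of_linearIndependent {a b c : R3}
    (h : LinearIndependent ℝ ![a, b, c]) :
    ∃ e : (ℝ × R2) ≃L[ℝ] R3, ∀ w, e w = w.1 • a + w.2.1 • b + w.2.2 • c := by
  let L : (ℝ × R2) →ₗ[ℝ] R3 := (LinearMap.fst ℝ ℝ R2).smulRight a +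
    (LinearMap.fst ℝ ℝ ℝ ∘ₗ LinearMap.snd ℝ ℝ R2).smulRight b +
    (LinearMap.snd ℝ ℝ ℝ ∘ₗ LinearMap.snd ℝ ℝ R2).smulRight c
  have hL : Function.Injective L := by
    refine (injective_iff_map_eq_zero L).2 fun w hw => ?_
    have hcoord := Fintype.linearIndependent_iff.1 h ![w.1, w.2.1, w.2.2] (by
      simpa [Fin.sum_univ_three, L] using hw)
    exact Prod.ext (hcoord 0) (Prod.ext (hcoord 1) (hcoord 2))
  exact ⟨(LinearEquiv.ofInjectiveEndo L hL).toContinuousLinearEquiv, fun _ => rfl⟩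

variable {a b : ℝ → R3}

/-- The translation surface `q.1 ^ 2 • a q.1 + q.2 ^ 2 • b q.2` generated by two curves with a
vanishing velocity at `0`; the factors `a` and `b` carry half their second derivatives at `0`. -/
def cuspTranslation (a b : ℝ → R3) (q : R2) : R3 := q.1 ^ 2 • a q.1 + q.2 ^ 2 • b q.2

theorem cuspTranslation_swap (q : R2) : cuspTranslation a b q.swap = cuspTranslation b a q :=
  add_comm _ _

theorem exists_cuspTranslation_fold (ha : ContDiff ℝ ∞ a) (hb : ContDiff ℝ ∞ b)
    (hli : LinearIndependent ℝ ![a 0, b 0, deriv b 0]) (x y : ℝ) :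
    ∃ (X m k : R3 → ℝ) (r : R2 → ℝ), ContDiff ℝ ∞ X ∧ ContDiff ℝ ∞ m ∧ ContDiff ℝ ∞ k ∧
      ContDiff ℝ ∞ r ∧ r 0 = 1 ∧ X 0 = 0 ∧
      (fderiv ℝ X 0 (a 0) = 1 ∧ fderiv ℝ X 0 (b 0) = 0 ∧ fderiv ℝ X 0 (deriv b 0) = 0) ∧
      ∀ᶠ q in 𝓝 0, X (cuspTranslation a b q) = (q.1 * r q) ^ 2 ∧
        x * q.1 ^ 3 + y * q.2 ^ 3 = m (cuspTranslation a b q) +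
          (q.1 * r q) ^ 3 * k (cuspTranslation a b q) := by
  obtain ⟨e, he⟩ := exists_continuousLinearEquiv_of_linearIndependent hli
  obtain ⟨B, hB, hB0, hBd, hBcusp⟩ := exists_contDiff_factor_cusp hb
  have heB : (e : ℝ × R2 →L[ℝ] R3) ∘L ContinuousLinearMap.inr ℝ ℝ R2 =
      (ContinuousLinearMap.fst ℝ ℝ ℝ).smulRight (b 0) +
        (ContinuousLinearMap.snd ℝ ℝ ℝ).smulRight (deriv b 0) :=
    ContinuousLinearMap.ext fun w => by simp [he]
  obtain ⟨T, r, ε, hchart, hT0, hTd⟩ := exists_isFoldChart hB hB0 (z := fun w => a w.1)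
    (by fun_prop) (e := e) (by simp [he]) (by rwa [heB])
  obtain ⟨m, k, hm, hk, hmk⟩ := hchart.exists_add_sq_smul_eq (τ := fun c : R2 => y * c.2)
    (by fun_prop) (N := fun w => x * w.1) (by fun_prop)
  have hT := hchart.contDiff_target
  have hr := hchart.contDiff_scale
  have hXd (w : ℝ × R2) : fderiv ℝ (fun P => (T P).1) 0 (e w) = w.1 := by
    rw [hTd.fst.fderiv]
    simp
  have hcusp : Tendsto (fun q : R2 => (q.1, q.2 ^ 2, q.2 ^ 3)) (𝓝 0) (𝓝 0) :=
    (by fun_prop : Continuous fun q : R2 => (q.1, q.2 ^ 2, q.2 ^ 3)).tendsto' _ _ (by simp)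
  refine ⟨fun P => (T P).1, m, k, fun q => r (q.1, q.2 ^ 2, q.2 ^ 3), by fun_prop, hm, hk,
    by fun_prop, by simpa using! hchart.scale_zero, by simp [hT0],
    ⟨by simpa [he] using hXd (1, 0, 0), by simpa [he] using hXd (0, 1, 0),
      by simpa [he] using hXd (0, 0, 1)⟩, ?_⟩
  filter_upwards [hcusp.eventually hmk, hcusp.eventually hchart.eventually_eq,
    continuous_snd.continuousAt.eventually hBcusp] with q hq hTq hBq
  simp only [hBq, add_comm (q.2 ^ 2 • b q.2)] at hq hTq
  exact ⟨congrArg Prod.fst hTq, by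
    rw [cuspTranslation, ← smul_eq_mul (_ ^ 3), ← hq, smul_eq_mul]; ring⟩

theorem fderiv_apply_of_eventually_cuspTranslation (ha : ContDiff ℝ ∞ a) (hb : ContDiff ℝ ∞ b)
    {m k : R3 → ℝ} {r : R2 → ℝ} (hm : ContDiff ℝ ∞ m) (hk : ContDiff ℝ ∞ k) (hr : ContDiff ℝ ∞ r)
    {x y : ℝ}
    (h : ∀ᶠ q in 𝓝 0, x * q.1 ^ 3 + y * q.2 ^ 3 = m (cuspTranslation a b q) +
      (q.1 * r q) ^ 3 * k (cuspTranslation a b q)) :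
    fderiv ℝ m 0 (a 0) = 0 ∧ fderiv ℝ m 0 (b 0) = 0 ∧
      fderiv ℝ m 0 (deriv a 0) = x - r 0 ^ 3 * k 0 ∧ fderiv ℝ m 0 (deriv b 0) = y := by
  have hinl : Tendsto (fun u : ℝ => (u, (0 : ℝ))) (𝓝 0) (𝓝 0) :=
    (by fun_prop : Continuous fun u : ℝ => (u, (0 : ℝ))).tendsto' _ _ rfl
  have hinr : Tendsto (fun u : ℝ => ((0 : ℝ), u)) (𝓝 0) (𝓝 0) :=
    (by fun_prop : Continuous fun u : ℝ => ((0 : ℝ), u)).tendsto' _ _ rfl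
  have hderiv {c : ℝ → ℝ} (hc : ContDiff ℝ ∞ c) : deriv (fun u => u * c u) 0 = c 0 := by
    simpa using! ((hasDerivAt_id (0 : ℝ)).mul (hc.differentiable (by simp) 0).hasDerivAt).deriv
  let c : ℝ → ℝ := fun u => x - r (u, 0) ^ 3 * k (u ^ 2 • a u)
  have hc : ContDiff ℝ ∞ c := by fun_prop
  have hc0 : c 0 = x - r 0 ^ 3 * k 0 := by simp [c, ← Prod.zero_eq_mk]
  obtain ⟨hma, hma'⟩ := fderiv_apply_of_eventually_sq_smul_eq hm ha
    (c := fun u => u * c u) (by fun_prop) (by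
      filter_upwards [hinl.eventually h] with u hu
      simp only [cuspTranslation, zero_pow two_ne_zero, zero_pow three_ne_zero, zero_smul,
        add_zero, mul_zero] at hu
      simp only [c, smul_eq_mul]
      linear_combination -hu)
  obtain ⟨hmb, hmb'⟩ := fderiv_apply_of_eventually_sq_smul_eq hm hb
    (c := fun u => u * y) (by fun_prop) (by
      filter_upwards [hinr.eventually h] with u hu
      simp only [cuspTranslation, zero_pow two_ne_zero, zero_pow three_ne_zero, zero_smul,
        zero_add, mul_zero, zero_mul, add_zero] at hu
      simp only [smul_eq_mul]
      linear_combination -hu)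
  exact ⟨by simpa using hma, by simpa using hmb, by rw [hma', hderiv hc, hc0],
    by rw [hmb', hderiv contDiff_const]⟩

/-- The surface `cuspTranslation a b`, folded along its first variable: on the surface `X` is the
square of a source coordinate `t = q.1 * r q`, and `t ^ 3` agrees with `x * q.1 ^ 3 + y * q.2 ^ 3`
up to a smooth function `m` of the image point. -/
structure IsCuspFold (a b : ℝ → R3) (x y : ℝ) (X m : R3 → ℝ) (r : R2 → ℝ) : Prop where
  contDiff_square : ContDiff ℝ ∞ X
  contDiff_rest : ContDiff ℝ ∞ m
  contDiff_scale : ContDiff ℝ ∞ r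
  scale_ne_zero : r 0 ≠ 0
  square_apply_fst : fderiv ℝ X 0 (a 0) ≠ 0
  square_apply_snd : fderiv ℝ X 0 (b 0) = 0
  square_apply_deriv_snd : fderiv ℝ X 0 (deriv b 0) = 0
  square_eq : ∀ᶠ q in 𝓝 0, X (cuspTranslation a b q) = (q.1 * r q) ^ 2
  cube_eq : ∀ᶠ q in 𝓝 0,
    x * q.1 ^ 3 + y * q.2 ^ 3 = m (cuspTranslation a b q) + (q.1 * r q) ^ 3

theorem exists_isCuspFold (ha : ContDiff ℝ ∞ a) (hb : ContDiff ℝ ∞ b)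
    (hli : LinearIndependent ℝ ![a 0, b 0, deriv b 0]) {x y : ℝ}
    (hxy : ∀ L : R3 →L[ℝ] ℝ, L (a 0) = 0 → L (b 0) = 0 → L (deriv a 0) = x →
      L (deriv b 0) ≠ y) : ∃ X m r, IsCuspFold a b x y X m r := by
  obtain ⟨X, m, k, r, hX, hm, hk, hr, hr0, hX0, ⟨hXa, hXb, hXb'⟩, hev⟩ :=
    exists_cuspTranslation_fold ha hb hli x y
  obtain ⟨hma, hmb, hma', hmb'⟩ :=
    fderiv_apply_of_eventually_cuspTranslation ha hb hm hk hr (hev.mono fun _ h => h.2)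
  have hk0 : k 0 ≠ 0 := fun h => hxy (fderiv ℝ m 0) hma hmb (by simp [hma', h]) hmb'
  obtain ⟨l, hl, hl0, hlk⟩ := exists_contDiff_eventually_pow_eq_of_odd hk hk0 (n := 3) (by decide)
  have hP : ContDiff ℝ ∞ (cuspTranslation a b) := by unfold cuspTranslation; fun_prop
  have hP0 : cuspTranslation a b 0 = 0 := by simp [cuspTranslation]
  have hXl : fderiv ℝ (fun P => X P * l P ^ 2) 0 = l 0 ^ 2 • fderiv ℝ X 0 := by
    have hl2 : ContDiff ℝ ∞ fun P => l P ^ 2 := by fun_prop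
    simpa [hX0] using! ((hX.differentiable (by simp) 0).hasFDerivAt.mul
      (hl2.differentiable (by simp) 0).hasFDerivAt).fderiv
  refine ⟨fun P => X P * l P ^ 2, m, fun q => r q * l (cuspTranslation a b q), by fun_prop, hm,
    by fun_prop, by simp [hr0, hP0, hl0], by simp [hXl, hXa, hl0], by simp [hXl, hXb],
    by simp [hXl, hXb'], ?_, ?_⟩
  · filter_upwards [hev] with q hq
    rw [hq.1]
    ring
  · filter_upwards [hev, (hP.continuous.tendsto' _ _ hP0).eventually hlk] with q hq hlq
    rw [hq.2, ← hlq]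
    ring

namespace IsCuspFold

variable {X Y m n : R3 → ℝ} {r s : R2 → ℝ} {x y : ℝ}

theorem fderiv_rest_apply (h : IsCuspFold a b x y X m r) (ha : ContDiff ℝ ∞ a)
    (hb : ContDiff ℝ ∞ b) :
    fderiv ℝ m 0 (a 0) = 0 ∧ fderiv ℝ m 0 (b 0) = 0 ∧ fderiv ℝ m 0 (deriv b 0) = y := by
  obtain ⟨hma, hmb, -, hmb'⟩ := fderiv_apply_of_eventually_cuspTranslation (k := fun _ => 1) ha hb
    h.contDiff_rest contDiff_const h.contDiff_scale (by simpa using! h.cube_eq)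
  exact ⟨hma, hmb, hmb'⟩

theorem injective_fderiv_source (h : IsCuspFold a b 0 1 X m r) (h' : IsCuspFold b a 1 0 Y n s) :
    Function.Injective (fderiv ℝ (fun q : R2 => (-(q.1 * r q), q.2 * s (q.2, q.1))) 0) := by
  have hr := h.contDiff_scale
  have hs : ContDiff ℝ ∞ fun q : R2 => s (q.2, q.1) :=
    h'.contDiff_scale.comp (contDiff_snd.prodMk contDiff_fst)
  have hd := ((hasFDerivAt_fst (𝕜 := ℝ) (p := (0 : R2))).mul
    (hr.differentiable (by simp) 0).hasFDerivAt).neg.prodMk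
    ((hasFDerivAt_snd (𝕜 := ℝ) (p := (0 : R2))).mul (hs.differentiable (by simp) 0).hasFDerivAt)
  refine (injective_iff_map_eq_zero _).2 fun q hq => ?_
  rw [show fderiv ℝ (fun q : R2 => (-(q.1 * r q), q.2 * s (q.2, q.1))) 0 = _ from hd.fderiv] at hq
  have hs0 : s (0, 0) ≠ 0 := h'.scale_ne_zero
  simpa [Prod.ext_iff, h.scale_ne_zero, hs0] using hq

theorem injective_fderiv_target (h : IsCuspFold a b 0 1 X m r) (h' : IsCuspFold b a 1 0 Y n s)
    (ha : ContDiff ℝ ∞ a) (hb : ContDiff ℝ ∞ b)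
    (hli : LinearIndependent ℝ ![a 0, b 0, deriv b 0])
    (hli' : LinearIndependent ℝ ![b 0, a 0, deriv a 0]) :
    Function.Injective (fderiv ℝ (fun P => (X P, Y P, m P - n P)) 0) := by
  obtain ⟨hma, hmb, hmb'⟩ := h.fderiv_rest_apply ha hb
  obtain ⟨hnb, hna, hna'⟩ := h'.fderiv_rest_apply hb ha
  have hn : fderiv ℝ n 0 = 0 := ext_of_linearIndependent hli' hnb hna hna'
  have hd := (h.contDiff_square.differentiable (by simp) 0).hasFDerivAt.prodMk
    ((h'.contDiff_square.differentiable (by simp) 0).hasFDerivAt.prodMk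
      ((h.contDiff_rest.differentiable (by simp) 0).hasFDerivAt.sub
        (h'.contDiff_rest.differentiable (by simp) 0).hasFDerivAt))
  rw [show fderiv ℝ (fun P => (X P, Y P, m P - n P)) 0 = _ from hd.fderiv]
  obtain ⟨e, he⟩ := exists_continuousLinearEquiv_of_linearIndependent hli
  refine (injective_iff_map_eq_zero _).2 fun v hv => ?_
  obtain ⟨w, rfl⟩ := e.surjective v
  have hX := congrArg Prod.fst hv
  have hY := congrArg (fun z : R3 => z.2.1) hv
  have hZ := congrArg (fun z : R3 => z.2.2) hv
  have hw3 : w.2.2 = 0 := by simpa [he, hn, hma, hmb, hmb'] using hZ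
  have hw1 : w.1 = 0 := by
    simpa [he, h.square_apply_fst, h.square_apply_snd, h.square_apply_deriv_snd] using hX
  have hw2 : w.2.1 = 0 := by simpa [he, hw1, hw3, h'.square_apply_fst] using hY
  simp [he, hw1, hw2, hw3]

theorem eventually_eq_cuspSum (h : IsCuspFold a b 0 1 X m r) (h' : IsCuspFold b a 1 0 Y n s) :
    ∀ᶠ q in 𝓝 0, (X (cuspTranslation a b q), Y (cuspTranslation a b q),
      m (cuspTranslation a b q) - n (cuspTranslation a b q)) =
        cuspSum (-(q.1 * r q), q.2 * s (q.2, q.1)) := by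
  have hswap : Tendsto (Prod.swap : R2 → R2) (𝓝 0) (𝓝 0) := continuous_swap.tendsto' _ _ rfl
  filter_upwards [h.square_eq, h.cube_eq, hswap.eventually h'.square_eq,
    hswap.eventually h'.cube_eq] with q hX hm hY hn
  rw [cuspTranslation_swap] at hY hn
  simp only [Prod.swap] at hY hn
  refine Prod.ext ?_ (Prod.ext hY ?_)
  · simp only [hX, cuspSum]
    ring
  · simp only [cuspSum]
    linear_combination hn - hm

end IsCuspFold

theorem exists_cuspTranslation_eq_cuspSum (ha : ContDiff ℝ ∞ a) (hb : ContDiff ℝ ∞ b)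
    (hli : LinearIndependent ℝ ![a 0, b 0, deriv b 0])
    (hli' : LinearIndependent ℝ ![b 0, a 0, deriv a 0]) :
    ∃ (Φ : R2 → R2) (Ψ : R3 → R3), ContDiff ℝ ∞ Φ ∧ ContDiff ℝ ∞ Ψ ∧ Φ 0 = 0 ∧
      Function.Injective (fderiv ℝ Φ 0) ∧ Function.Injective (fderiv ℝ Ψ 0) ∧
      ∀ᶠ q in 𝓝 0, Ψ (cuspTranslation a b q) = cuspSum (Φ q) := by
  obtain ⟨X, m, r, h⟩ := exists_isCuspFold ha hb hli (x := 0) (y := 1) fun L ha0 hb0 ha' hb' => by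
    simp [ext_of_linearIndependent hli' (M := 0) hb0 ha0 ha'] at hb'
  obtain ⟨Y, n, s, h'⟩ := exists_isCuspFold hb ha hli' (x := 1) (y := 0) fun L hb0 ha0 hb' ha' => by
    simp [ext_of_linearIndependent hli' (M := 0) hb0 ha0 ha'] at hb'
  have hr := h.contDiff_scale
  have hs := h'.contDiff_scale
  exact ⟨fun q => (-(q.1 * r q), q.2 * s (q.2, q.1)), fun P => (X P, Y P, m P - n P), by fun_prop,
    h.contDiff_square.prodMk (h'.contDiff_square.prodMk (h.contDiff_rest.sub h'.contDiff_rest)),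
    by simp, h.injective_fderiv_source h', h.injective_fderiv_target h' ha hb hli hli',
    h.eventually_eq_cuspSum h'⟩

end CuspTranslation

section Necessity

theorem linearIndependent_squares_cubes {A B : R2} (hAB : det2 A B ≠ 0) (h₁ : A.1 * B.1 = 0)
    (h₂ : A.2 * B.2 = 0) {w : R3} (hw : w.2.2 = B.1 ^ 3 + B.2 ^ 3) :
    LinearIndependent ℝ ![(A.1 ^ 2, A.2 ^ 2, 0), (B.1 ^ 2, B.2 ^ 2, 0), w] := by
  have hdiag : A.1 ≠ 0 ∧ A.2 = 0 ∧ B.1 = 0 ∧ B.2 ≠ 0 ∨ A.1 = 0 ∧ A.2 ≠ 0 ∧ B.1 ≠ 0 ∧ B.2 = 0 := by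
    unfold det2 at hAB
    grind
  refine Fintype.linearIndependent_iff.2 fun c hc => ?_
  obtain ⟨hc₁, hc₂, hc₃⟩ : c 0 * A.1 ^ 2 + c 1 * B.1 ^ 2 + c 2 * w.1 = 0 ∧
      c 0 * A.2 ^ 2 + c 1 * B.2 ^ 2 + c 2 * w.2.1 = 0 ∧ c 2 * w.2.2 = 0 := by
    simpa [Fin.sum_univ_three, Prod.ext_iff] using hc
  rw [hw] at hc₃
  have hall : c 0 = 0 ∧ c 1 = 0 ∧ c 2 = 0 := by
    rcases hdiag with ⟨hA₁, hA₂, hB₁, hB₂⟩ | ⟨hA₁, hA₂, hB₁, hB₂⟩ <;> simp_all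
  intro i
  fin_cases i
  exacts [hall.1, hall.2.1, hall.2.2]

theorem det2_ne_zero_of_injective {L : R2 →L[ℝ] R2} (hL : Function.Injective L) :
    det2 (L (1, 0)) (L (0, 1)) ≠ 0 := by
  have hcoord (q : R2) : L q = q.1 • L (1, 0) + q.2 • L (0, 1) := by
    rw [← map_smul, ← map_smul, ← map_add]
    simp
  intro hdet
  have hker (q : R2) (hq : q.1 • L (1, 0) + q.2 • L (0, 1) = 0) : q = 0 :=
    hL (by rw [hcoord, hq, map_zero])
  unfold det2 at hdet
  have h₁ := hker ((L (0, 1)).1, -(L (1, 0)).1)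
    (Prod.ext (by simp; ring) (by simp; linear_combination -hdet))
  have h₂ := hker ((L (0, 1)).2, -(L (1, 0)).2)
    (Prod.ext (by simp; linear_combination hdet) (by simp; ring))
  simp only [Prod.ext_iff, Prod.fst_zero, Prod.snd_zero, neg_eq_zero] at h₁ h₂
  simpa [Prod.ext_iff] using hker (1, 0) (by simp [Prod.ext_iff, h₁.2, h₂.2])

variable {a b : ℝ → R3} {Φ : R2 → R2} {Ψ : R3 → R3}

theorem fderiv_apply_of_eventually_eq_cuspSum (ha : ContDiff ℝ ∞ a) (hb : ContDiff ℝ ∞ b)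
    (hΦ : ContDiff ℝ ∞ Φ) (hΨ : ContDiff ℝ ∞ Ψ) (hΦ0 : Φ 0 = 0)
    (h : ∀ᶠ q in 𝓝 0, Ψ (cuspTranslation a b q) = cuspSum (Φ q)) (ξ : R2) :
    fderiv ℝ Ψ 0 (ξ.1 ^ 2 • a 0 + ξ.2 ^ 2 • b 0) =
      ((fderiv ℝ Φ 0 ξ).1 ^ 2, (fderiv ℝ Φ 0 ξ).2 ^ 2, 0) ∧
    (fderiv ℝ Ψ 0 (ξ.1 ^ 3 • deriv a 0 + ξ.2 ^ 3 • deriv b 0)).2.2 =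
      (fderiv ℝ Φ 0 ξ).1 ^ 3 + (fderiv ℝ Φ 0 ξ).2 ^ 3 := by
  obtain ⟨k, hk, hΦk, hk0⟩ := exists_contDiff_slope hΦ
  let φ : ℝ → R2 := fun u => k (u, 0, ξ)
  have hφ : ContDiff ℝ ∞ φ := by fun_prop
  let z : ℝ → R3 := fun u => ξ.1 ^ 2 • a (u * ξ.1) + ξ.2 ^ 2 • b (u * ξ.2)
  have hz : ContDiff ℝ ∞ z := by fun_prop
  have hz1 : deriv z 0 = ξ.1 ^ 3 • deriv a 0 + ξ.2 ^ 3 • deriv b 0 := by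
    have hscale {c : ℝ → R3} (hc : ContDiff ℝ ∞ c) (x : ℝ) :
        HasDerivAt (fun u => x ^ 2 • c (u * x)) (x ^ 3 • deriv c 0) 0 := by
      have hcx := (hc.differentiable (by simp) 0).hasDerivAt.scomp_of_eq (0 : ℝ)
        ((hasDerivAt_id (0 : ℝ)).mul_const x) (by simp)
      simpa only [smul_smul, one_mul, ← pow_succ] using! hcx.const_smul (x ^ 2)
    exact ((hscale ha ξ.1).add (hscale hb ξ.2)).deriv
  let c : ℝ → R3 := fun u => ((φ u).1 ^ 2, (φ u).2 ^ 2, u * ((φ u).1 ^ 3 + (φ u).2 ^ 3))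
  have hc1 : (deriv c 0).2.2 = (φ 0).1 ^ 3 + (φ 0).2 ^ 3 := by
    have hcube : HasDerivAt (fun u => u * ((φ u).1 ^ 3 + (φ u).2 ^ 3)) _ 0 :=
      (hasDerivAt_id (0 : ℝ)).mul
        (ContDiff.differentiable (n := ∞) (by fun_prop) (by simp) 0).hasDerivAt
    have hc : Differentiable ℝ c := ContDiff.differentiable (n := ∞) (by fun_prop) (by simp)
    simpa using! (hc 0).hasDerivAt.hasFDerivAt.snd.snd.hasDerivAt.unique hcube
  have hray : Tendsto (fun u : ℝ => u • ξ) (𝓝 0) (𝓝 0) :=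
    (by fun_prop : Continuous fun u : ℝ => u • ξ).tendsto' _ _ (zero_smul ℝ ξ)
  obtain ⟨h₂, h₃⟩ := fderiv_apply_of_eventually_sq_smul_eq hΨ hz (c := c) (by fun_prop) (by
    filter_upwards [hray.eventually h] with u hu
    have hΦu : Φ (u • ξ) = u • φ u := by simpa [hΦ0] using hΦk u 0 ξ
    have hzu : cuspTranslation a b (u • ξ) = u ^ 2 • z u := by
      simp [cuspTranslation, z, mul_pow, smul_smul]
    rw [← hzu, hu, hΦu]
    ext <;> simp [cuspSum, c] <;> ring)
  have hφ0 : φ 0 = fderiv ℝ Φ 0 ξ := hk0 0 ξ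
  rw [hz1] at h₃
  exact ⟨by simpa [z, c, hφ0] using h₂, by rw [h₃, hc1, hφ0]⟩

theorem linearIndependent_of_eventually_eq_cuspSum (ha : ContDiff ℝ ∞ a) (hb : ContDiff ℝ ∞ b)
    (hΦ : ContDiff ℝ ∞ Φ) (hΨ : ContDiff ℝ ∞ Ψ) (hΦ0 : Φ 0 = 0)
    (hΦi : Function.Injective (fderiv ℝ Φ 0))
    (h : ∀ᶠ q in 𝓝 0, Ψ (cuspTranslation a b q) = cuspSum (Φ q)) :
    LinearIndependent ℝ ![a 0, b 0, deriv b 0] ∧ LinearIndependent ℝ ![b 0, a 0, deriv a 0] := by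
  have hΨa := fderiv_apply_of_eventually_eq_cuspSum ha hb hΦ hΨ hΦ0 h (1, 0)
  have hΨb := fderiv_apply_of_eventually_eq_cuspSum ha hb hΦ hΨ hΦ0 h (0, 1)
  have hΨab := (fderiv_apply_of_eventually_eq_cuspSum ha hb hΦ hΨ hΦ0 h (1, 1)).1
  have hdet := det2_ne_zero_of_injective hΦi
  have hsum : fderiv ℝ Φ 0 (1, 1) = fderiv ℝ Φ 0 (1, 0) + fderiv ℝ Φ 0 (0, 1) := by
    rw [← map_add]
    simp
  generalize fderiv ℝ Φ 0 (1, 0) = A at *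
  generalize fderiv ℝ Φ 0 (0, 1) = B at *
  simp only [one_pow, one_smul, ne_eq, OfNat.ofNat_ne_zero, not_false_eq_true, zero_pow, zero_smul,
    add_zero, zero_add] at hΨa hΨb hΨab
  rw [map_add, hΨa.1, hΨb.1, hsum] at hΨab
  have h₁ : A.1 * B.1 = 0 := by
    have := congrArg Prod.fst hΨab
    simp only [Prod.fst_add] at this
    linear_combination -this / 2
  have h₂ : A.2 * B.2 = 0 := by
    have := congrArg (fun P : R3 => P.2.1) hΨab
    simp only [Prod.fst_add, Prod.snd_add] at this
    linear_combination -this / 2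
  refine ⟨.of_comp (fderiv ℝ Ψ 0).toLinearMap ?_, .of_comp (fderiv ℝ Ψ 0).toLinearMap ?_⟩
  · convert! linearIndependent_squares_cubes hdet h₁ h₂ hΨb.2 using 1
    ext i : 1
    fin_cases i
    exacts [hΨa.1, hΨb.1, rfl]
  · convert! linearIndependent_squares_cubes (A := B) (B := A)
      (fun h0 => hdet (by unfold det2 at *; linear_combination -h0)) (by linarith) (by linarith)
      hΨa.2 using 1
    ext i : 1
    fin_cases i
    exacts [hΨb.1, hΨa.1, rfl]

theorem fderiv_cuspSum_zero : fderiv ℝ cuspSum 0 = 0 := by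
  have h₁ := hasFDerivAt_fst (𝕜 := ℝ) (p := (0 : R2))
  have h₂ := hasFDerivAt_snd (𝕜 := ℝ) (p := (0 : R2))
  refine HasFDerivAt.fderiv ?_
  convert! (h₁.pow 2).prodMk ((h₂.pow 2).prodMk ((h₁.pow 3).add (h₂.pow 3))) using 1
  ext <;> simp

theorem deriv_eq_zero_of_eventually_eq_cuspSum {γ : ℝ → R3} (hγ : ContDiff ℝ ∞ γ) (hγ0 : γ 0 = 0)
    (hΨ : ContDiff ℝ ∞ Ψ) (hΨi : Function.Injective (fderiv ℝ Ψ 0)) {c : ℝ → R2}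
    (hc : ContDiff ℝ ∞ c) (hc0 : c 0 = 0) (h : ∀ᶠ u in 𝓝 0, Ψ (γ u) = cuspSum (c u)) :
    deriv γ 0 = 0 := by
  have hcusp : Differentiable ℝ cuspSum := by unfold cuspSum; fun_prop
  have hl := (hΨ.differentiable (by simp) 0).hasFDerivAt.comp_hasDerivAt_of_eq (0 : ℝ)
    (hγ.differentiable (by simp) 0).hasDerivAt hγ0.symm
  have hr := (hcusp 0).hasFDerivAt.comp_hasDerivAt_of_eq (0 : ℝ)
    (hc.differentiable (by simp) 0).hasDerivAt hc0.symm
  rw [fderiv_cuspSum_zero] at hr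
  exact hΨi (by simpa using hl.unique (hr.congr_of_eventuallyEq h))

end Necessity

section Criterion

/-- The curves with velocities `a` and `b` have ordinary cusps at `s` and `t`, and the osculating
plane of either cusp does not contain the tangent direction of the other. -/
def HasTransverseCusps (a b : ℝ → R3) (s t : ℝ) : Prop :=
  a s = 0 ∧ b t = 0 ∧ LinearIndependent ℝ ![deriv a s, deriv b t, deriv (deriv b) t] ∧
    LinearIndependent ℝ ![deriv b t, deriv a s, deriv (deriv a) s]

theorem linearIndependent_fin_three_smul_iff {K V : Type*} [Field K] [AddCommGroup V] [Module K V]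
    {u v w : V} {c d e : K} (hc : c ≠ 0) (hd : d ≠ 0) (he : e ≠ 0) :
    LinearIndependent K ![c • u, d • v, e • w] ↔ LinearIndependent K ![u, v, w] := by
  rw [← LinearIndependent.units_smul_iff ![u, v, w] ![.mk0 c hc, .mk0 d hd, .mk0 e he]]
  congr! 1
  ext i : 1
  fin_cases i <;> rfl

theorem hasTransverseCusps_smul_iff {a b : ℝ → R3} {s t c d : ℝ} (hc : c ≠ 0) (hd : d ≠ 0) :
    HasTransverseCusps (fun u => c • a u) (fun v => d • b v) s t ↔ HasTransverseCusps a b s t := by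
  have hderiv (e : ℝ) (γ : ℝ → R3) : deriv (fun u => e • γ u) = fun u => e • deriv γ u :=
    funext fun _ => deriv_fun_const_smul_field e γ
  simp only [HasTransverseCusps, hderiv, smul_eq_zero, hc, hd, false_or,
    linearIndependent_fin_three_smul_iff hc hd hd, linearIndependent_fin_three_smul_iff hd hc hc]

theorem hasTransverseCusps_comp_const_add_iff {a b : ℝ → R3} {s t : ℝ} :
    HasTransverseCusps (fun u => a (s + u)) (fun v => b (t + v)) 0 0 ↔
      HasTransverseCusps a b s t := by
  have hderiv (x : ℝ) (γ : ℝ → R3) : deriv (fun u => γ (x + u)) = fun u => deriv γ (x + u) :=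
    funext fun _ => deriv_comp_const_add ..
  simp only [HasTransverseCusps, hderiv, add_zero]

theorem deriv_id_smul {F : Type*} [NormedAddCommGroup F] [NormedSpace ℝ F] {ψ : ℝ → F}
    (hψ : Differentiable ℝ ψ) : deriv (fun u => u • ψ u) = fun u => u • deriv ψ u + ψ u := by
  funext u
  simpa using! ((hasDerivAt_id u).smul (hψ u).hasDerivAt).deriv

theorem deriv_sq_smul {F : Type*} [NormedAddCommGroup F] [NormedSpace ℝ F] {z : ℝ → F}
    (hz : ContDiff ℝ ∞ z) :
    deriv (fun u => u ^ 2 • z u) 0 = 0 ∧ deriv (deriv fun u => u ^ 2 • z u) 0 = (2 : ℝ) • z 0 ∧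
      deriv (deriv (deriv fun u => u ^ 2 • z u)) 0 = (6 : ℝ) • deriv z 0 := by
  let ψ : ℝ → F := fun u => u • deriv z u + (2 : ℝ) • z u
  have hz' : ContDiff ℝ ∞ (deriv z) := (contDiff_infty_iff_deriv.1 hz).2
  have hψ : ContDiff ℝ ∞ ψ := by fun_prop
  have hψ' : Differentiable ℝ (deriv ψ) :=
    (contDiff_infty_iff_deriv.1 hψ).2.differentiable (by simp)
  have hderiv : deriv (fun u => u ^ 2 • z u) = fun u => u • ψ u := by
    funext u
    refine Eq.trans ((hasDerivAt_pow 2 u).smul (hz.differentiable (by simp) u).hasDerivAt).deriv ?_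
    simp only [ψ]
    module
  have hψ0 : deriv ψ 0 = (3 : ℝ) • deriv z 0 := by
    have hsum : HasDerivAt ψ _ 0 :=
      ((hasDerivAt_id (0 : ℝ)).smul (hz'.differentiable (by simp) 0).hasDerivAt).add
        ((hz.differentiable (by simp) 0).hasDerivAt.const_smul (2 : ℝ))
    rw [hsum.deriv, id_eq]
    module
  rw [hderiv, deriv_id_smul (hψ.differentiable (by simp))]
  refine ⟨by simp, by simp [ψ], ?_⟩
  rw [deriv_fun_add (differentiableAt_fun_id.fun_smul (hψ' 0)) (hψ.differentiable (by simp) 0),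
    deriv_id_smul hψ']
  simp only [hψ0]
  module

theorem hasTransverseCusps_deriv_sq_smul_iff {z w : ℝ → R3} (hz : ContDiff ℝ ∞ z)
    (hw : ContDiff ℝ ∞ w) :
    HasTransverseCusps (deriv fun u => u ^ 2 • z u) (deriv fun v => v ^ 2 • w v) 0 0 ↔
      LinearIndependent ℝ ![z 0, w 0, deriv w 0] ∧ LinearIndependent ℝ ![w 0, z 0, deriv z 0] := by
  obtain ⟨hz₁, hz₂, hz₃⟩ := deriv_sq_smul hz
  obtain ⟨hw₁, hw₂, hw₃⟩ := deriv_sq_smul hw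
  simp only [HasTransverseCusps, hz₁, hz₂, hz₃, hw₁, hw₂, hw₃, true_and]
  rw [linearIndependent_fin_three_smul_iff two_ne_zero two_ne_zero (by norm_num),
    linearIndependent_fin_three_smul_iff two_ne_zero two_ne_zero (by norm_num)]

theorem exists_contDiff_eq_smul {F : Type} [NormedAddCommGroup F] [NormedSpace ℝ F]
    [CompleteSpace F] {γ : ℝ → F} (hγ : ContDiff ℝ ∞ γ) (hγ0 : γ 0 = 0) :
    ∃ φ : ℝ → F, ContDiff ℝ ∞ φ ∧ (∀ u, γ u = u • φ u) ∧ φ 0 = deriv γ 0 := by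
  obtain ⟨k, hk, hγk, hk0⟩ := exists_contDiff_slope hγ
  exact ⟨fun u => k (u, 0, 1), by fun_prop, fun u => by simpa [hγ0] using hγk u 0 1,
    by simp [hk0]⟩

theorem exists_contDiff_eq_sq_smul {F : Type} [NormedAddCommGroup F] [NormedSpace ℝ F]
    [CompleteSpace F] {γ : ℝ → F} (hγ : ContDiff ℝ ∞ γ) (hγ0 : γ 0 = 0) (hγ1 : deriv γ 0 = 0) :
    ∃ z : ℝ → F, ContDiff ℝ ∞ z ∧ γ = fun u => u ^ 2 • z u := by
  obtain ⟨φ, hφ, hγφ, hφ0⟩ := exists_contDiff_eq_smul hγ hγ0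
  obtain ⟨z, hz, hφz, -⟩ := exists_contDiff_eq_smul hφ (hφ0.trans hγ1)
  exact ⟨z, hz, funext fun u => by rw [hγφ, hφz, smul_smul, sq]⟩

theorem exists_eq_cuspSum_iff_hasTransverseCusps {α β : ℝ → R3} (hα : ContDiff ℝ ∞ α)
    (hβ : ContDiff ℝ ∞ β) (hα0 : α 0 = 0) (hβ0 : β 0 = 0) :
    (∃ (Φ : R2 → R2) (Ψ : R3 → R3), ContDiff ℝ ∞ Φ ∧ ContDiff ℝ ∞ Ψ ∧ Φ 0 = 0 ∧
      Function.Injective (fderiv ℝ Φ 0) ∧ Function.Injective (fderiv ℝ Ψ 0) ∧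
      ∀ᶠ x in 𝓝 0, Ψ (α x.1 + β x.2) = cuspSum (Φ x)) ↔
    HasTransverseCusps (deriv α) (deriv β) 0 0 := by
  constructor
  · rintro ⟨Φ, Ψ, hΦ, hΨ, hΦ0, hΦi, hΨi, h⟩
    have hα1 : deriv α 0 = 0 := by
      refine deriv_eq_zero_of_eventually_eq_cuspSum hα hα0 hΨ hΨi (c := fun u => Φ (u, 0))
        (by fun_prop) hΦ0 ?_
      have hinl : Tendsto (fun u : ℝ => (u, (0 : ℝ))) (𝓝 0) (𝓝 0) :=
        (by fun_prop : Continuous fun u : ℝ => (u, (0 : ℝ))).tendsto' _ _ rfl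
      simpa [hβ0] using hinl.eventually h
    have hβ1 : deriv β 0 = 0 := by
      refine deriv_eq_zero_of_eventually_eq_cuspSum hβ hβ0 hΨ hΨi (c := fun u => Φ (0, u))
        (by fun_prop) hΦ0 ?_
      have hinr : Tendsto (fun u : ℝ => ((0 : ℝ), u)) (𝓝 0) (𝓝 0) :=
        (by fun_prop : Continuous fun u : ℝ => ((0 : ℝ), u)).tendsto' _ _ rfl
      simpa [hα0] using hinr.eventually h
    obtain ⟨z, hz, rfl⟩ := exists_contDiff_eq_sq_smul hα hα0 hα1
    obtain ⟨w, hw, rfl⟩ := exists_contDiff_eq_sq_smul hβ hβ0 hβ1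
    exact (hasTransverseCusps_deriv_sq_smul_iff hz hw).2
      (linearIndependent_of_eventually_eq_cuspSum hz hw hΦ hΨ hΦ0 hΦi h)
  · intro h
    obtain ⟨z, hz, rfl⟩ := exists_contDiff_eq_sq_smul hα hα0 h.1
    obtain ⟨w, hw, rfl⟩ := exists_contDiff_eq_sq_smul hβ hβ0 h.2.1
    obtain ⟨hli, hli'⟩ := (hasTransverseCusps_deriv_sq_smul_iff hz hw).1 h
    exact exists_cuspTranslation_eq_cuspSum hz hw hli hli'

variable {f : R2 → R3} {a b : ℝ → R3}

theorem hasDerivAt_pu (hf : Differentiable ℝ f) (u v : ℝ) :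
    HasDerivAt (fun x => f (x, v)) (pu f (u, v)) u :=
  (hf (u, v)).hasFDerivAt.comp_hasDerivAt u ((hasDerivAt_id u).prodMk (hasDerivAt_const u v))

theorem hasDerivAt_pv (hf : Differentiable ℝ f) (u v : ℝ) :
    HasDerivAt (fun y => f (u, y)) (pv f (u, v)) v :=
  (hf (u, v)).hasFDerivAt.comp_hasDerivAt v ((hasDerivAt_const v u).prodMk (hasDerivAt_id v))

theorem sub_eq_sub_of_pv_eq (hf : Differentiable ℝ f) (hv : ∀ q, pv f q = b q.2) (u u' v v' : ℝ) :
    f (u, v) - f (u', v) = f (u, v') - f (u', v') := by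
  have hd (y : ℝ) : HasDerivAt (fun y => f (u, y) - f (u', y)) 0 y := by
    simpa [hv] using! (hasDerivAt_pv hf u y).sub (hasDerivAt_pv hf u' y)
  exact is_const_of_deriv_eq_zero (fun y => (hd y).differentiableAt) (fun y => (hd y).deriv) v v'

theorem aequiv_fD4p_iff_hasTransverseCusps (hf : ContDiff ℝ ∞ f) (hu : ∀ q, pu f q = a q.1)
    (hv : ∀ q, pv f q = b q.2) {p : R2} :
    AEquiv f p fD4p 0 ↔ HasTransverseCusps a b p.1 p.2 := by
  have hfd : Differentiable ℝ f := hf.differentiable (by simp)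
  let α : ℝ → R3 := fun x => f (p.1 + x, p.2) - f p
  let β : ℝ → R3 := fun y => f (p.1, p.2 + y) - f p
  have hα : deriv α = fun x => a (p.1 + x) := by
    funext x
    rw [((hasDerivAt_pu hfd (p.1 + x) p.2).comp_const_add p.1 x |>.sub_const (f p)).deriv, hu]
  have hβ : deriv β = fun y => b (p.2 + y) := by
    funext y
    rw [((hasDerivAt_pv hfd p.1 (p.2 + y)).comp_const_add p.2 y |>.sub_const (f p)).deriv, hv]
  have hsplit (x : R2) : f (p + x) - f p = α x.1 + β x.2 := by
    have := sub_eq_sub_of_pv_eq hfd hv (p.1 + x.1) p.1 (p.2 + x.2) p.2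
    rw [show p + x = (p.1 + x.1, p.2 + x.2) from rfl, eq_add_of_sub_eq this]
    simp only [α, β, Prod.mk.eta]
    abel
  rw [← aequiv_cuspSum_iff_aequiv_fD4p, aequiv_iff_exists_contDiff hf.continuous,
    ← hasTransverseCusps_comp_const_add_iff, ← hα, ← hβ,
    ← exists_eq_cuspSum_iff_hasTransverseCusps (by fun_prop) (by fun_prop) (by simp [α])
      (by simp [β])]
  simp [hsplit, cuspSum]

end Criterion

theorem invariance_D4_plus_general {f F : R2 → R3} {g1 g2 w1 w2 : ℝ → ℝ} {s t : ℝ}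
    (hf : IsGTMS f g1 g2 w1 w2) (hF : IsGTMS F g1 g2 (fun u => s * w1 u) fun v => t * w2 v)
    (hs : s ≠ 0) (ht : t ≠ 0) (p : R2) :
    AEquiv f p fD4p (0, 0) ↔ AEquiv F p fD4p (0, 0) := by
  let a : ℝ → R3 := fun u =>
    ((-1 - g1 u ^ 2) * w1 u / 2, (1 - g1 u ^ 2) * w1 u / 2, g1 u * w1 u)
  let b : ℝ → R3 := fun v =>
    ((1 + g2 v ^ 2) * w2 v / 2, (1 - g2 v ^ 2) * w2 v / 2, -(g2 v * w2 v))
  have hFu (q : R2) : pu F q = s • a q.1 := by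
    rw [hF.deriv_u]
    ext <;> simp [a] <;> ring
  have hFv (q : R2) : pv F q = t • b q.2 := by
    rw [hF.deriv_v]
    ext <;> simp [b] <;> ring
  calc AEquiv f p fD4p (0, 0) ↔ HasTransverseCusps a b p.1 p.2 :=
        aequiv_fD4p_iff_hasTransverseCusps hf.smooth_f hf.deriv_u hf.deriv_v
    _ ↔ HasTransverseCusps (fun u => s • a u) (fun v => t • b v) p.1 p.2 :=
        (hasTransverseCusps_smul_iff hs ht).symm
    _ ↔ AEquiv F p fD4p (0, 0) :=
        (aequiv_fD4p_iff_hasTransverseCusps (a := fun u => s • a u) (b := fun v => t • b v)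
          hF.smooth_f hFu hFv).symm

/-- invariance of D₄⁺ singularities under the associated family
(isometric deformation) and conjugation (anti-isometric deformation). -/
theorem invariance_D4_plus
    (f fhat : R2 → R3) (F : ℝ → R2 → R3) (g1 g2 w1 w2 : ℝ → ℝ)
    (hf : IsGTMS f g1 g2 w1 w2)
    (hF : ∀ θ : ℝ, IsGTMS (F θ) g1 g2
      (fun u => Real.exp θ * w1 u) (fun v => Real.exp (-θ) * w2 v))
    (hfhat : IsGTMS fhat g1 g2 w1 (fun v => -w2 v))
    (p : R2) (hω : w1 p.1 * w2 p.2 = 0) :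
    (AEquiv f p fD4p (0, 0) ↔ ∀ θ : ℝ, AEquiv (F θ) p fD4p (0, 0)) ∧
    (AEquiv f p fD4p (0, 0) ↔ AEquiv fhat p fD4p (0, 0)) :=
  ⟨⟨fun h θ => (invariance_D4_plus_general hf (hF θ) (exp_ne_zero _) (exp_ne_zero _) p).1 h,
    fun h => (invariance_D4_plus_general hf (hF 0) (exp_ne_zero _) (exp_ne_zero _) p).2 (h 0)⟩,
    invariance_D4_plus_general (s := 1) (t := -1) hf (by simpa using hfhat) one_ne_zero
      (by norm_num) p⟩
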